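/- arXiv:2111.10851 — 2 statements merged into one kernel-verified Lean document; each statement's English description precedes it below -/
import Mathlib

section
/- Let I be an unmixed ass-decomposable monomial ideal in R = K[x_1,…,x_n] that is not primary, and let x^k be a decomposing monomial of I. Then depth(R/I) = depth(R/(I : x^k)) = depth(R/(I + (x^k))). -/
/-!
The elementary symmetric polynomials `e_d, …, e_1` form one sequence that serves all the quotients
in question at once. Weak regularity passes from the outer terms of the short exact sequence `0 →
R/(I : x) → R/I → R/(I + (x)) → 0` to the middle one. Modulo the ideal of a `d`-dimensional
coordinate subspace `e_d` is the product of the `d` remaining variables, so the sequence is weakly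
regular there by induction on `d`. Passing to `I : x` and `I + (x)` for the variables `x` in `√I`
extends this to primary monomial ideals with `d`-dimensional radical, and decomposing monomials
extend it to ass-decomposable monomial ideals all of whose associated primes have dimension `d`.
The associated primes of `I : x^k` and of `I + (x^k)` are among those of `I`; hence all three
quotients are Cohen–Macaulay of dimension `d = dim R/I`.
-/

open MvPolynomial

namespace Paper

/-- The depth of a module `M` with respect to an ideal `J`: the supremum of lengths of
`M`-regular sequences consisting of elements of `J`. -/
noncomputable def depth {A : Type} [CommRing A] (J : Ideal A)
    (M : Type) [AddCommGroup M] [Module A M] : ℕ∞ :=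
  sSup {k : ℕ∞ | ∃ rs : List A, (rs.length : ℕ∞) = k ∧ (∀ r ∈ rs, r ∈ J) ∧
    RingTheory.Sequence.IsRegular M rs}

/-- The irrelevant maximal ideal `𝔪 = (x_1, …, x_n)` of `K[x_1, …, x_n]`. -/
noncomputable def mIdeal (n : ℕ) (K : Type) [Field K] : Ideal (MvPolynomial (Fin n) K) :=
  Ideal.span (Set.range X)

/-- The Krull dimension of a module, `dim M = dim (A / ann M)`. -/
noncomputable def mdim (A : Type) [CommRing A] (M : Type) [AddCommGroup M] [Module A M] :
    WithBot ℕ∞ :=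
  ringKrullDim (A ⧸ Module.annihilator A M)

/-- A module over `K[x_1, …, x_n]` is Cohen-Macaulay if its depth with respect to the
irrelevant maximal ideal equals its Krull dimension. -/
def IsCMMod (n : ℕ) (K : Type) [Field K] (M : Type) [AddCommGroup M]
    [Module (MvPolynomial (Fin n) K) M] : Prop :=
  (depth (mIdeal n K) M : WithBot ℕ∞) = mdim (MvPolynomial (Fin n) K) M

/-- A module over `K[x_1, …, x_n]` is sequentially Cohen-Macaulay if it admits a finite
filtration `0 = M_0 ⊂ M_1 ⊂ ⋯ ⊂ M_r = M` with Cohen-Macaulay quotients of strictly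
increasing dimensions. -/
def IsSeqCMMod (n : ℕ) (K : Type) [Field K] (M : Type) [AddCommGroup M]
    [Module (MvPolynomial (Fin n) K) M] : Prop :=
  ∃ (r : ℕ) (f : Fin (r + 1) → Submodule (MvPolynomial (Fin n) K) M),
    f 0 = ⊥ ∧ f (Fin.last r) = ⊤ ∧ StrictMono f ∧
    (∀ i : Fin r,
      IsCMMod n K (↥(f i.succ) ⧸ Submodule.comap (f i.succ).subtype (f i.castSucc))) ∧
    ∀ i j : Fin r, i < j →
      mdim (MvPolynomial (Fin n) K)
          (↥(f i.succ) ⧸ Submodule.comap (f i.succ).subtype (f i.castSucc)) <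
        mdim (MvPolynomial (Fin n) K)
          (↥(f j.succ) ⧸ Submodule.comap (f j.succ).subtype (f j.castSucc))

/-- Height of an ideal (meaningful for prime ideals). -/
noncomputable def htP {A : Type} [CommRing A] (𝔭 : Ideal A) : ℕ∞ :=
  ⨆ (h : 𝔭.IsPrime), Order.height (⟨𝔭, h⟩ : PrimeSpectrum A)

/-- The big height of `I`: the maximum of the heights of the associated primes of `I`. -/
noncomputable def bigh {A : Type} [CommRing A] (I : Ideal A) : ℕ∞ :=
  ⨆ 𝔭 ∈ associatedPrimes A (A ⧸ I), htP 𝔭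

/-- A monomial ideal: an ideal generated by monomials. -/
def IsMonomialIdeal {n : ℕ} {K : Type} [Field K] (I : Ideal (MvPolynomial (Fin n) K)) : Prop :=
  ∃ S : Set (Fin n →₀ ℕ), I = Ideal.span ((fun a => monomial a (1 : K)) '' S)

/-- A squarefree monomial ideal: an ideal generated by squarefree monomials. -/
def IsSquarefreeMonomialIdeal {n : ℕ} {K : Type} [Field K]
    (I : Ideal (MvPolynomial (Fin n) K)) : Prop :=
  ∃ S : Set (Fin n →₀ ℕ), (∀ a ∈ S, ∀ i, a i ≤ 1) ∧
    I = Ideal.span ((fun a => monomial a (1 : K)) '' S)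

/-- An ideal `I` is unmixed if `dim A/I = dim A/𝔭` for every associated prime `𝔭` of `I`. -/
def IsUnmixed {A : Type} [CommRing A] (I : Ideal A) : Prop :=
  ∀ 𝔭 ∈ associatedPrimes A (A ⧸ I), ringKrullDim (A ⧸ I) = ringKrullDim (A ⧸ 𝔭)

/-- ass-decomposable ideals: `I` is ass-decomposable if it is primary, or there are a
variable `x_i ∉ √I` and `k ≥ 1` with `ass(I + (x_i^k)) = {𝔭 ∈ ass(I) : x_i ∈ 𝔭}` such
that `I + (x_i^k)` and `I : x_i^k` are both ass-decomposable. -/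
inductive IsAssDecomposable {n : ℕ} {K : Type} [Field K] :
    Ideal (MvPolynomial (Fin n) K) → Prop
  | primary {I : Ideal (MvPolynomial (Fin n) K)} (h : I.IsPrimary) : IsAssDecomposable I
  | step {I : Ideal (MvPolynomial (Fin n) K)} (i : Fin n) (k : ℕ) (hk : 1 ≤ k)
      (hx : X i ∉ I.radical)
      (hass : associatedPrimes (MvPolynomial (Fin n) K)
          (MvPolynomial (Fin n) K ⧸ (I + Ideal.span {(X i : MvPolynomial (Fin n) K) ^ k})) =
        {𝔭 ∈ associatedPrimes (MvPolynomial (Fin n) K) (MvPolynomial (Fin n) K ⧸ I) |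
          (X i : MvPolynomial (Fin n) K) ∈ 𝔭})
      (h1 : IsAssDecomposable (I + Ideal.span {(X i : MvPolynomial (Fin n) K) ^ k}))
      (h2 : IsAssDecomposable (I.colon (Ideal.span {(X i : MvPolynomial (Fin n) K) ^ k}))) :
      IsAssDecomposable I

section RegularSequences

open RingTheory.Sequence Pointwise

theorem isWeaklyRegular_of_subsingleton {A M : Type*} [CommRing A] [AddCommGroup M] [Module A M]
    [Subsingleton M] (rs : List A) : IsWeaklyRegular M rs := by
  induction rs generalizing M with
  | nil => exact .nil A M
  | cons r rs ih => exact .cons (Function.injective_of_subsingleton _) ih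

theorem isWeaklyRegular_of_exact {A M M' M'' : Type*} [CommRing A] [AddCommGroup M] [Module A M]
    [AddCommGroup M'] [Module A M'] [AddCommGroup M''] [Module A M''] {f : M' →ₗ[A] M}
    {g : M →ₗ[A] M''} (hf : Function.Injective f) (hfg : Function.Exact f g)
    (hg : Function.Surjective g) {rs : List A} (h' : IsWeaklyRegular M' rs)
    (h'' : IsWeaklyRegular M'' rs) : IsWeaklyRegular M rs := by
  induction rs generalizing M M' M'' with
  | nil => exact .nil A M
  | cons r rs ih =>
    rw [isWeaklyRegular_cons_iff] at h' h''
    have hf_map : Function.Injective (QuotSMulTop.map r f) := by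
      have h0 : Function.Exact (0 : M' →ₗ[A] M') f :=
        (LinearMap.exact_zero_iff_injective M' f).mpr hf
      have := QuotSMulTop.map_first_exact_on_four_term_exact_of_isSMulRegular_last h0 hfg h''.1
      rwa [map_zero, LinearMap.exact_zero_iff_injective] at this
    exact .cons
      (isSMulRegular_of_range_eq_ker hf (LinearMap.exact_iff.mp hfg).symm h'.1 h''.1)
      (ih hf_map (QuotSMulTop.map_exact r hfg hg) (QuotSMulTop.map_surjective r hg) h'.2 h''.2)

theorem length_le_supportDim_of_isRegular {A M : Type*} [CommRing A] [IsNoetherianRing A]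
    [AddCommGroup M] [Module A M] [Module.Finite A M] {rs : List A} (h : IsRegular M rs) :
    (rs.length : WithBot ℕ∞) ≤ Module.supportDim A M := by
  induction rs generalizing M with
  | nil =>
    have := h.nontrivial
    obtain ⟨d, hd⟩ := WithBot.ne_bot_iff_exists.mp (Module.supportDim_ne_bot_of_nontrivial A M)
    simp [← hd]
  | cons r rs ih =>
    rw [isRegular_cons_iff] at h
    calc ((r :: rs).length : WithBot ℕ∞) = rs.length + 1 := by simp
      _ ≤ Module.supportDim A (QuotSMulTop r M) + 1 := by gcongr; exact ih h.2
      _ ≤ Module.supportDim A M :=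
        Module.supportDim_quotSMulTop_succ_le_of_notMem_minimalPrimes
          fun _ => h.1.notMem_of_mem_minimalPrimes

theorem depth_eq_length_of_isRegular {A M : Type} [CommRing A] [IsNoetherianRing A]
    [AddCommGroup M] [Module A M] [Module.Finite A M] {J : Ideal A} {rs : List A}
    (hrs : IsRegular M rs) (hJ : ∀ r ∈ rs, r ∈ J)
    (hdim : Module.supportDim A M ≤ (rs.length : WithBot ℕ∞)) : depth J M = rs.length := by
  apply le_antisymm
  · apply sSup_le
    rintro _ ⟨ss, rfl, -, hss⟩
    exact_mod_cast (length_le_supportDim_of_isRegular hss).trans hdim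
  · exact le_sSup ⟨rs, rfl, hJ, hrs⟩

end RegularSequences

section CyclicModules

open RingTheory.Sequence Pointwise

variable {A : Type*} [CommRing A] (I : Ideal A)

/-- Multiplication by `x` as a map `A ⧸ (I : x) → A ⧸ I`, the left half of the short exact
sequence `0 → A ⧸ (I : x) → A ⧸ I → A ⧸ (I + (x)) → 0`. -/
def colonMul (x : A) : (A ⧸ I.colon (Ideal.span {x})) →ₗ[A] A ⧸ I :=
  Submodule.mapQ _ I (LinearMap.mulRight A x) fun _ => Ideal.mem_colon_span_singleton.mp

theorem colonMul_injective (x : A) : Function.Injective (colonMul I x) := by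
  rw [← LinearMap.ker_eq_bot]
  refine Submodule.ker_liftQ_eq_bot _ _ _ fun a ha => Ideal.mem_colon_span_singleton.mpr ?_
  exact (Submodule.Quotient.mk_eq_zero I).mp ha

theorem exact_colonMul_factor (x : A) :
    Function.Exact (colonMul I x) (Submodule.factor (le_sup_left : I ≤ I ⊔ Ideal.span {x})) := by
  refine (Submodule.mkQ_surjective I).forall.mpr fun f => ?_
  have hf : Submodule.factor (le_sup_left : I ≤ I ⊔ Ideal.span {x}) (I.mkQ f) = 0 ↔
      f ∈ I ⊔ Ideal.span {x} := Submodule.Quotient.mk_eq_zero _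
  rw [hf, sup_comm, Ideal.mem_span_singleton_sup]
  constructor
  · rintro ⟨a, b, hb, rfl⟩
    refine ⟨Submodule.Quotient.mk a, (Submodule.Quotient.eq I).mpr ?_⟩
    simpa using hb
  · rintro ⟨y, hy⟩
    obtain ⟨a, rfl⟩ := Submodule.mkQ_surjective _ y
    exact ⟨a, f - a * x, (Submodule.Quotient.eq I).mp hy.symm, by ring⟩

theorem associatedPrimes_quotient_colon_subset (x : A) :
    associatedPrimes A (A ⧸ I.colon (Ideal.span {x})) ⊆ associatedPrimes A (A ⧸ I) :=
  associatedPrimes.subset_of_injective (colonMul_injective I x)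

variable {I}

theorem isWeaklyRegular_quotient_of_colon_of_sup (x : A) {rs : List A}
    (hcolon : IsWeaklyRegular (A ⧸ I.colon (Ideal.span {x})) rs)
    (hsup : IsWeaklyRegular (A ⧸ (I ⊔ Ideal.span {x})) rs) : IsWeaklyRegular (A ⧸ I) rs :=
  isWeaklyRegular_of_exact (colonMul_injective I x) (exact_colonMul_factor I x)
    (Submodule.factor_surjective _) hcolon hsup

theorem isWeaklyRegular_quotient_cons_iff {r : A} {rs : List A} :
    IsWeaklyRegular (A ⧸ I) (r :: rs) ↔
      IsSMulRegular (A ⧸ I) r ∧ IsWeaklyRegular (A ⧸ (I ⊔ Ideal.span {r})) rs := by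
  have hr : r • (⊤ : Submodule A (A ⧸ I)) = Submodule.map I.mkQ (Ideal.span {r}) := by
    rw [← I.range_mkQ, LinearMap.range_eq_map, ← Submodule.map_pointwise_smul,
      ← Submodule.ideal_span_singleton_smul, smul_eq_mul, Ideal.mul_top]
  rw [isWeaklyRegular_cons_iff, LinearEquiv.isWeaklyRegular_congr
    ((Submodule.quotEquivOfEq _ _ hr).trans
      (Submodule.quotientQuotientEquivQuotientSup I (Ideal.span {r})))]

theorem isRegular_quotient_of_le {J : Ideal A} {rs : List A} (hrs : IsWeaklyRegular (A ⧸ I) rs)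
    (hrJ : ∀ r ∈ rs, r ∈ J) (hIJ : I ≤ J) (hJ : J ≠ ⊤) : IsRegular (A ⧸ I) rs := by
  refine ⟨hrs, fun htop => hJ ?_⟩
  have hJ_map : Submodule.map I.mkQ J = ⊤ := by
    rw [eq_top_iff, htop]
    calc Ideal.ofList rs • (⊤ : Submodule A (A ⧸ I)) ≤ J • ⊤ :=
          Submodule.smul_mono_left (Ideal.span_le.mpr hrJ)
      _ = Submodule.map I.mkQ J := by
          rw [← I.range_mkQ, LinearMap.range_eq_map, ← Submodule.map_smul'', smul_eq_mul,
            Ideal.mul_top]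
  rwa [Submodule.map_mkQ_eq_top, sup_eq_right.mpr hIJ] at hJ_map

theorem isSMulRegular_quotient_of_isPrime (hI : I.IsPrime) {r : A} (hr : r ∉ I) :
    IsSMulRegular (A ⧸ I) r :=
  (isSMulRegular_quotient_iff_mem_of_smul_mem I r).mpr fun _ hf =>
    (hI.mem_or_mem hf).resolve_left hr

theorem lt_colon_of_mem_radical {x : A} (hI : I ≠ ⊤) (hx : x ∈ I.radical) :
    I < I.colon (Ideal.span {x}) := by
  refine Ideal.le_colon.lt_of_ne fun h => hI ?_
  have hreg : IsSMulRegular (A ⧸ I) x := by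
    refine (isSMulRegular_quotient_iff_mem_of_smul_mem I x).mpr fun f hf => ?_
    rw [h, Ideal.mem_colon_span_singleton, mul_comm]
    exact hf
  obtain ⟨k, hk⟩ := hx
  refine (Ideal.eq_top_iff_one I).mpr
    (mem_of_isSMulRegular_quotient_of_smul_mem (hreg.pow k) ?_)
  rwa [smul_eq_mul, mul_one]

theorem colon_sup_span_mul {x : A} (hx : IsSMulRegular (A ⧸ I) x) (y : A) :
    (I ⊔ Ideal.span {x * y}).colon (Ideal.span {x}) = I ⊔ Ideal.span {y} := by
  ext f
  rw [Ideal.mem_colon_span_singleton, sup_comm, Ideal.mem_span_singleton_sup, sup_comm,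
    Ideal.mem_span_singleton_sup]
  constructor
  · rintro ⟨a, b, hb, hab⟩
    refine ⟨a, f - a * y, mem_of_isSMulRegular_quotient_of_smul_mem hx ?_, by ring⟩
    convert hb using 1
    rw [smul_eq_mul]
    linear_combination -hab
  · rintro ⟨a, b, hb, rfl⟩
    exact ⟨a, b * x, I.mul_mem_right x hb, by ring⟩

theorem isWeaklyRegular_quotient_sup_span_prod {ι : Type*} {s : Finset ι} {y : ι → A}
    {rs : List A} (hy : ∀ i ∈ s, IsSMulRegular (A ⧸ I) (y i))
    (hrs : ∀ i ∈ s, IsWeaklyRegular (A ⧸ (I ⊔ Ideal.span {y i})) rs) :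
    IsWeaklyRegular (A ⧸ (I ⊔ Ideal.span {∏ i ∈ s, y i})) rs := by
  classical
  induction s using Finset.induction_on with
  | empty =>
    have : Subsingleton (A ⧸ (I ⊔ Ideal.span {∏ i ∈ ∅, y i})) := by simp
    exact isWeaklyRegular_of_subsingleton rs
  | insert a s ha ih =>
    rw [Finset.forall_mem_insert] at hy hrs
    rw [Finset.prod_insert ha]
    apply isWeaklyRegular_quotient_of_colon_of_sup (y a)
    · rw [colon_sup_span_mul hy.1]
      exact ih hy.2 hrs.2
    · have hle : Ideal.span {y a * ∏ i ∈ s, y i} ≤ Ideal.span {y a} :=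
        Ideal.span_singleton_le_span_singleton.mpr (dvd_mul_right _ _)
      rw [sup_assoc, sup_eq_right.mpr hle]
      exact hrs.1

theorem sup_span_singleton_congr {r s : A} (h : r - s ∈ I) :
    I ⊔ Ideal.span {r} = I ⊔ Ideal.span {s} := by
  have span_le {r s : A} (h : r - s ∈ I) : Ideal.span {r} ≤ I ⊔ Ideal.span {s} := by
    rw [Ideal.span_singleton_le_iff_mem, sup_comm, Ideal.mem_span_singleton_sup]
    exact ⟨1, r - s, h, by ring⟩
  exact le_antisymm (sup_le le_sup_left (span_le h))
    (sup_le le_sup_left (span_le (sub_mem_comm_iff.mp h)))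

end CyclicModules

section CoordinateIdeals

variable {σ R : Type*} [CommRing R]

theorem ker_killCompl {τ : Type*} {f : σ → τ} (hf : Function.Injective f) :
    RingHom.ker (killCompl (R := R) hf) = Ideal.span (X '' (Set.range f)ᶜ) := by
  ext p
  rw [RingHom.mem_ker, mem_ideal_span_X_image, MvPolynomial.ext_iff]
  simp only [coeff_killCompl, coeff_zero]
  constructor
  · intro hp m hm
    by_contra! hm_range
    have hsub : (m.support : Set τ) ⊆ Set.range f := fun i hi =>
      by_contra fun hi' => Finsupp.mem_support_iff.mp hi (hm_range i hi')
    rw [mem_support_iff, ← Finsupp.mapDomain_comapDomain f hf m hsub] at hm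
    exact hm (hp _)
  · intro hp u
    by_contra hu
    obtain ⟨i, hi, hui⟩ := hp _ (mem_support_iff.mpr hu)
    exact hui (Finsupp.mapDomain_of_notMem_range u i hi)

variable (R) in
/-- The ideal of the coordinate subspace of affine `σ`-space whose free coordinates are those in
`s`; it is generated by the variables *outside* `s`. -/
noncomputable def coordIdeal (s : Set σ) : Ideal (MvPolynomial σ R) := Ideal.span (X '' sᶜ)

theorem coordIdeal_eq_ker_killCompl (s : Set σ) :
    coordIdeal R s = RingHom.ker (killCompl (R := R) (Subtype.val_injective (p := (· ∈ s)))) := by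
  rw [ker_killCompl, Subtype.range_coe_subtype, Set.ofPred_mem_eq, coordIdeal]

theorem coordIdeal_isPrime [IsDomain R] (s : Set σ) : (coordIdeal R s).IsPrime := by
  rw [coordIdeal_eq_ker_killCompl]
  exact RingHom.ker_isPrime _

theorem X_mem_coordIdeal_iff [Nontrivial R] {s : Set σ} {i : σ} :
    X i ∈ coordIdeal R s ↔ i ∉ s := by
  classical
  rw [coordIdeal, mem_ideal_span_X_image, support_X]
  simp [Finsupp.single_apply]

theorem coordIdeal_diff_singleton (s : Set σ) (a : σ) :
    coordIdeal R (s \ {a}) = coordIdeal R s ⊔ Ideal.span {X a} := by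
  rw [coordIdeal, coordIdeal, Set.compl_sdiff, Set.image_union, Set.image_singleton,
    Ideal.span_union, sup_comm]

theorem ringKrullDim_quotient_coordIdeal [IsNoetherianRing R] (s : Set σ) [Finite s] :
    ringKrullDim (MvPolynomial σ R ⧸ coordIdeal R s) = ringKrullDim R + Nat.card s := by
  have hsurj : Function.Surjective (killCompl (R := R) (Subtype.val_injective (p := (· ∈ s)))) :=
    fun p => ⟨rename _ p, killCompl_rename_app _ p⟩
  rw [coordIdeal_eq_ker_killCompl,
    ringKrullDim_eq_of_ringEquiv (Ideal.quotientKerAlgEquivOfSurjective hsurj).toRingEquiv]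
  exact MvPolynomial.ringKrullDim_of_isNoetherianRing

end CoordinateIdeals

section ElementarySymmetric

open RingTheory.Sequence

variable (σ R : Type*) [Fintype σ] [CommRing R]

/-- The elementary symmetric polynomials `e_d, …, e_1`, in decreasing order of degree. -/
noncomputable def esymmList (d : ℕ) : List (MvPolynomial σ R) :=
  (List.range d).reverse.map fun j => esymm σ R (j + 1)

theorem length_esymmList (d : ℕ) : (esymmList σ R d).length = d := by simp [esymmList]

theorem esymmList_succ (d : ℕ) :
    esymmList σ R (d + 1) = esymm σ R (d + 1) :: esymmList σ R d := by
  simp [esymmList, List.range_succ]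

theorem esymm_succ_mem_span_range_X (d : ℕ) :
    esymm σ R (d + 1) ∈ Ideal.span (Set.range (X : σ → MvPolynomial σ R)) := by
  refine Ideal.sum_mem _ fun t ht => ?_
  obtain ⟨i, hi⟩ : t.Nonempty := by
    rw [← Finset.card_pos, (Finset.mem_powersetCard.mp ht).2]
    exact d.succ_pos
  exact Ideal.mem_of_dvd _ (Finset.dvd_prod_of_mem _ hi) (Ideal.subset_span ⟨i, rfl⟩)

theorem mem_span_range_X_of_mem_esymmList {d : ℕ} {r : MvPolynomial σ R}
    (hr : r ∈ esymmList σ R d) : r ∈ Ideal.span (Set.range (X : σ → MvPolynomial σ R)) := by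
  obtain ⟨j, -, rfl⟩ := List.mem_map.mp hr
  exact esymm_succ_mem_span_range_X σ R j

variable {σ}

theorem esymm_card_sub_prod_X_mem_coordIdeal (s : Finset σ) :
    esymm σ R s.card - ∏ i ∈ s, X i ∈ coordIdeal R (s : Set σ) := by
  classical
  rw [esymm, ← Finset.add_sum_erase _ _ (Finset.mem_powersetCard_univ.mpr rfl : s ∈ _),
    add_sub_cancel_left]
  refine Ideal.sum_mem _ fun t ht => ?_
  obtain ⟨hts, ht⟩ := Finset.mem_erase.mp ht
  have hsub : ¬ t ⊆ s := fun h =>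
    hts (Finset.eq_of_subset_of_card_le h (Finset.mem_powersetCard_univ.mp ht).ge)
  obtain ⟨i, hit, his⟩ := Finset.not_subset.mp hsub
  exact Ideal.mem_of_dvd _ (Finset.dvd_prod_of_mem _ hit) (Ideal.subset_span ⟨i, his, rfl⟩)

variable {R}

theorem isWeaklyRegular_esymmList_quotient_coordIdeal [IsDomain R] (s : Finset σ) :
    IsWeaklyRegular (MvPolynomial σ R ⧸ coordIdeal R (s : Set σ)) (esymmList σ R s.card) := by
  classical
  induction hd : s.card generalizing s with
  | zero => exact .nil _ _
  | succ d ih =>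
    have hprime := coordIdeal_isPrime (R := R) (s : Set σ)
    have hX {i : σ} (hi : i ∈ s) : X i ∉ coordIdeal R (s : Set σ) :=
      fun h => X_mem_coordIdeal_iff.mp h hi
    have hesymm := esymm_card_sub_prod_X_mem_coordIdeal R s
    rw [hd] at hesymm
    rw [esymmList_succ, isWeaklyRegular_quotient_cons_iff, sup_span_singleton_congr hesymm]
    constructor
    · refine isSMulRegular_quotient_of_isPrime hprime fun h => ?_
      have hprod : ∏ i ∈ s, X i ∈ coordIdeal R (s : Set σ) := by
        simpa using Ideal.sub_mem _ h hesymm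
      obtain ⟨i, hi, hXi⟩ := hprime.prod_mem_iff.mp hprod
      exact hX hi hXi
    · refine isWeaklyRegular_quotient_sup_span_prod
        (fun i hi => isSMulRegular_quotient_of_isPrime hprime (hX hi)) fun i hi => ?_
      rw [← coordIdeal_diff_singleton, ← Finset.coe_erase]
      exact ih _ (by rw [Finset.card_erase_of_mem hi, hd, Nat.add_sub_cancel])

end ElementarySymmetric

section MonomialIdeals

theorem mem_of_forall_monomial_mem {σ R : Type*} [CommSemiring R] {I : Ideal (MvPolynomial σ R)}
    {f : MvPolynomial σ R} (h : ∀ m ∈ f.support, monomial m 1 ∈ I) : f ∈ I := by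
  rw [f.as_sum]
  refine Ideal.sum_mem _ fun m hm => ?_
  rw [← mul_one (coeff m f), ← C_mul_monomial]
  exact Ideal.mul_mem_left _ _ (h m hm)

theorem monomial_one_mem_span_monomial_image_iff {σ R : Type*} [CommSemiring R] [Nontrivial R]
    {S : Set (σ →₀ ℕ)} {m : σ →₀ ℕ} :
    monomial m (1 : R) ∈ Ideal.span ((fun a => monomial a (1 : R)) '' S) ↔ ∃ a ∈ S, a ≤ m := by
  classical
  simp [mem_ideal_span_monomial_image, support_monomial]

variable {n : ℕ} {K : Type} [Field K] {I J : Ideal (MvPolynomial (Fin n) K)}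

theorem isMonomialIdeal_iff :
    IsMonomialIdeal I ↔ ∀ f ∈ I, ∀ m ∈ f.support, monomial m 1 ∈ I := by
  constructor
  · rintro ⟨S, rfl⟩ f hf m hm
    exact monomial_one_mem_span_monomial_image_iff.mpr
      (mem_ideal_span_monomial_image.mp hf m hm)
  · refine fun h => ⟨{m | monomial m 1 ∈ I}, le_antisymm (fun f hf => ?_) ?_⟩
    · exact mem_of_forall_monomial_mem fun m hm => Ideal.subset_span ⟨m, h f hf m hm, rfl⟩
    · exact Ideal.span_le.mpr (Set.image_subset_iff.mpr fun m hm => hm)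

theorem isMonomialIdeal_span_X_pow (i : Fin n) (k : ℕ) :
    IsMonomialIdeal (Ideal.span {(X i : MvPolynomial (Fin n) K) ^ k}) :=
  ⟨{Finsupp.single i k}, by rw [Set.image_singleton, X_pow_eq_monomial]⟩

theorem IsMonomialIdeal.sup (hI : IsMonomialIdeal I) (hJ : IsMonomialIdeal J) :
    IsMonomialIdeal (I ⊔ J) := by
  obtain ⟨S, rfl⟩ := hI
  obtain ⟨T, rfl⟩ := hJ
  exact ⟨S ∪ T, by rw [Set.image_union, Ideal.span_union]⟩

theorem IsMonomialIdeal.monomial_mem_sup_iff (hI : IsMonomialIdeal I) (hJ : IsMonomialIdeal J)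
    {m : Fin n →₀ ℕ} :
    monomial m 1 ∈ I ⊔ J ↔ monomial m 1 ∈ I ∨ monomial m 1 ∈ J := by
  obtain ⟨S, rfl⟩ := hI
  obtain ⟨T, rfl⟩ := hJ
  rw [← Ideal.span_union, ← Set.image_union]
  simp only [monomial_one_mem_span_monomial_image_iff, Set.mem_union, or_and_right, exists_or]

theorem IsMonomialIdeal.sup_ne_top (hI : IsMonomialIdeal I) (hJ : IsMonomialIdeal J)
    (hI_ne : I ≠ ⊤) (hJ_ne : J ≠ ⊤) : I ⊔ J ≠ ⊤ := by
  rw [Ideal.ne_top_iff_one] at *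
  exact fun h => ((hI.monomial_mem_sup_iff hJ).mp h).elim hI_ne hJ_ne

theorem IsMonomialIdeal.monomial_add_mem (hI : IsMonomialIdeal I) {f : MvPolynomial (Fin n) K}
    {u m : Fin n →₀ ℕ} (hf : f * monomial u 1 ∈ I) (hm : m ∈ f.support) :
    monomial (m + u) 1 ∈ I := by
  refine isMonomialIdeal_iff.mp hI _ hf _ ?_
  rwa [mem_support_iff, coeff_mul_monomial, mul_one, ← mem_support_iff]

theorem IsMonomialIdeal.colon_monomial (hI : IsMonomialIdeal I) (u : Fin n →₀ ℕ) :
    IsMonomialIdeal (I.colon (Ideal.span {monomial u (1 : K)})) := by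
  refine isMonomialIdeal_iff.mpr fun f hf m hm => ?_
  rw [Ideal.mem_colon_span_singleton] at hf ⊢
  rw [monomial_mul, mul_one]
  exact hI.monomial_add_mem hf hm

theorem IsMonomialIdeal.isSMulRegular_monomial_iff (hI : IsMonomialIdeal I) {u : Fin n →₀ ℕ} :
    IsSMulRegular (MvPolynomial (Fin n) K ⧸ I) (monomial u (1 : K)) ↔
      ∀ m, monomial (m + u) (1 : K) ∈ I → monomial m (1 : K) ∈ I := by
  rw [isSMulRegular_quotient_iff_mem_of_smul_mem]
  constructor
  · intro h m hm
    refine h _ ?_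
    rwa [smul_eq_mul, monomial_mul, mul_one, add_comm]
  · intro h f hf
    rw [smul_eq_mul, mul_comm] at hf
    exact mem_of_forall_monomial_mem fun m hm => h m (hI.monomial_add_mem hf hm)

theorem IsMonomialIdeal.isSMulRegular_monomial_sup (hI : IsMonomialIdeal I)
    (hJ : IsMonomialIdeal J) {u : Fin n →₀ ℕ}
    (huI : IsSMulRegular (MvPolynomial (Fin n) K ⧸ I) (monomial u (1 : K)))
    (huJ : IsSMulRegular (MvPolynomial (Fin n) K ⧸ J) (monomial u (1 : K))) :
    IsSMulRegular (MvPolynomial (Fin n) K ⧸ (I ⊔ J)) (monomial u (1 : K)) := by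
  rw [hI.isSMulRegular_monomial_iff] at huI
  rw [hJ.isSMulRegular_monomial_iff] at huJ
  rw [(hI.sup hJ).isSMulRegular_monomial_iff]
  simp only [hI.monomial_mem_sup_iff hJ]
  exact fun m => Or.imp (huI m) (huJ m)

theorem isSMulRegular_X_quotient_span_X {i j : Fin n} (hij : i ≠ j) :
    IsSMulRegular (MvPolynomial (Fin n) K ⧸ Ideal.span {(X j : MvPolynomial (Fin n) K)})
      (X i : MvPolynomial (Fin n) K) := by
  have hj : Ideal.span {(X j : MvPolynomial (Fin n) K)} = coordIdeal K {j}ᶜ := by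
    rw [coordIdeal, compl_compl, Set.image_singleton]
  rw [hj]
  exact isSMulRegular_quotient_of_isPrime (coordIdeal_isPrime _)
    fun h => X_mem_coordIdeal_iff.mp h hij

theorem isSMulRegular_monomial_one {σ R M : Type*} [CommSemiring R] [AddCommMonoid M]
    [Module (MvPolynomial σ R) M] {m : σ →₀ ℕ}
    (h : ∀ i ∈ m.support, IsSMulRegular M (X i : MvPolynomial σ R)) :
    IsSMulRegular M (monomial m (1 : R)) := by
  rw [monomial_eq, C_1, one_mul]
  exact Finset.prod_induction _ (IsSMulRegular M ·) (fun _ _ => IsSMulRegular.mul) (.one M)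
    fun i hi => (h i hi).pow (m i)

theorem IsMonomialIdeal.le_coordIdeal (hI : IsMonomialIdeal I) (hI_ne : I ≠ ⊤) {s : Set (Fin n)}
    (hs : ∀ t ∈ s, IsSMulRegular (MvPolynomial (Fin n) K ⧸ I) (X t : MvPolynomial (Fin n) K)) :
    I ≤ coordIdeal K s := by
  intro f hf
  rw [coordIdeal, mem_ideal_span_X_image]
  intro m hm
  by_contra! hm_s
  have hreg : IsSMulRegular (MvPolynomial (Fin n) K ⧸ I) (monomial m (1 : K)) :=
    isSMulRegular_monomial_one fun i hi =>
      hs i (by_contra fun his => Finsupp.mem_support_iff.mp hi (hm_s i his))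
  refine hI_ne ((Ideal.eq_top_iff_one I).mpr (mem_of_isSMulRegular_quotient_of_smul_mem hreg ?_))
  rw [smul_eq_mul, mul_one]
  exact isMonomialIdeal_iff.mp hI f hf m hm

end MonomialIdeals

section Decomposable

open RingTheory.Sequence

variable {n : ℕ} {K : Type} [Field K] {I : Ideal (MvPolynomial (Fin n) K)}

theorem IsMonomialIdeal.isWeaklyRegular_quotient_of_coordIdeal {s : Set (Fin n)}
    {rs : List (MvPolynomial (Fin n) K)} (hI : IsMonomialIdeal I)
    (hrs : IsWeaklyRegular (MvPolynomial (Fin n) K ⧸ coordIdeal K s) rs)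
    (hreg : ∀ t ∈ s, IsSMulRegular (MvPolynomial (Fin n) K ⧸ I) (X t : MvPolynomial (Fin n) K))
    (hrad : ∀ t ∉ s, X t ∈ I.radical) : IsWeaklyRegular (MvPolynomial (Fin n) K ⧸ I) rs := by
  -- As long as some `X j` with `j ∉ s` is missing from `I`, both `I : X j` and `I + (X j)` are
  -- strictly larger than `I` and inherit all the hypotheses.
  induction I using WellFoundedGT.induction with
  | ind I ih =>
    by_cases hI_top : I = ⊤
    · have := Ideal.Quotient.subsingleton_iff.mpr hI_top
      exact isWeaklyRegular_of_subsingleton rs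
    by_cases hX : ∀ t ∉ s, X t ∈ I
    · have hI_eq : I = coordIdeal K s :=
        le_antisymm (hI.le_coordIdeal hI_top hreg)
          (Ideal.span_le.mpr (Set.image_subset_iff.mpr hX))
      rwa [hI_eq]
    obtain ⟨j, hjs, hj⟩ : ∃ j ∉ s, X j ∉ I := by simpa using hX
    apply isWeaklyRegular_quotient_of_colon_of_sup (X j)
    · have hlt := lt_colon_of_mem_radical hI_top (hrad j hjs)
      exact ih _ hlt (hI.colon_monomial _)
        (fun t ht => (hreg t ht).of_injective _ (colonMul_injective I _))
        fun t ht => Ideal.radical_mono hlt.le (hrad t ht)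
    · have hj_mon : IsMonomialIdeal (Ideal.span {(X j : MvPolynomial (Fin n) K)}) := by
        simpa using isMonomialIdeal_span_X_pow (K := K) j 1
      refine ih _ (left_lt_sup.mpr ?_) (hI.sup hj_mon) (fun t ht => ?_)
        fun t ht => Ideal.radical_mono le_sup_left (hrad t ht)
      · rwa [Ideal.span_singleton_le_iff_mem]
      · exact hI.isSMulRegular_monomial_sup hj_mon (hreg t ht)
          (isSMulRegular_X_quotient_span_X fun h => hjs (h ▸ ht))

theorem IsMonomialIdeal.isWeaklyRegular_esymmList_of_isPrimary (hmon : IsMonomialIdeal I)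
    (hI : I.IsPrimary) {d : ℕ} (hd : ringKrullDim (MvPolynomial (Fin n) K ⧸ I.radical) = d) :
    IsWeaklyRegular (MvPolynomial (Fin n) K ⧸ I) (esymmList (Fin n) K d) := by
  classical
  set s : Finset (Fin n) := {t | X t ∉ I.radical} with hs
  have hreg : ∀ t ∈ s,
      IsSMulRegular (MvPolynomial (Fin n) K ⧸ I) (X t : MvPolynomial (Fin n) K) := by
    refine fun t ht => (isSMulRegular_quotient_iff_mem_of_smul_mem I _).mpr fun f hf => ?_
    rw [smul_eq_mul, mul_comm] at hf
    exact ((Ideal.isPrimary_iff.mp hI).2 hf).resolve_right (by simpa [hs] using ht)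
  have hrad : ∀ t ∉ s, X t ∈ I.radical := by simp [hs]
  have hrad_eq : I.radical = coordIdeal K (s : Set (Fin n)) :=
    le_antisymm
      ((coordIdeal_isPrime _).radical_le_iff.mpr (hmon.le_coordIdeal hI.ne_top hreg))
      (Ideal.span_le.mpr (Set.image_subset_iff.mpr hrad))
  have hcard : s.card = d := by
    rw [hrad_eq, ringKrullDim_quotient_coordIdeal, ringKrullDim_eq_zero_of_field] at hd
    simpa using hd
  exact hmon.isWeaklyRegular_quotient_of_coordIdeal
    (hcard ▸ isWeaklyRegular_esymmList_quotient_coordIdeal s) hreg hrad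

theorem IsAssDecomposable.isWeaklyRegular_esymmList (hI : IsAssDecomposable I)
    (hmon : IsMonomialIdeal I) {d : ℕ}
    (hd : ∀ P ∈ associatedPrimes (MvPolynomial (Fin n) K) (MvPolynomial (Fin n) K ⧸ I),
      ringKrullDim (MvPolynomial (Fin n) K ⧸ P) = d) :
    IsWeaklyRegular (MvPolynomial (Fin n) K ⧸ I) (esymmList (Fin n) K d) := by
  induction hI with
  | primary hI =>
    refine hmon.isWeaklyRegular_esymmList_of_isPrimary hI (hd _ ?_)
    rw [associatedPrimes.eq_singleton_of_isPrimary hI]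
    rfl
  | step i k _ _ hass _ _ ih_sup ih_colon =>
    refine isWeaklyRegular_quotient_of_colon_of_sup (X i ^ k) (ih_colon ?_ fun P hP => ?_)
      (ih_sup (hmon.sup (isMonomialIdeal_span_X_pow i k)) fun P hP => ?_)
    · rw [X_pow_eq_monomial]
      exact hmon.colon_monomial _
    · exact hd P (associatedPrimes_quotient_colon_subset _ _ hP)
    · rw [hass] at hP
      exact hd P hP.1

theorem IsMonomialIdeal.depth_quotient_eq_of_isWeaklyRegular (hmon : IsMonomialIdeal I)
    (hI : I ≠ ⊤) {d : ℕ}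
    (hreg : IsWeaklyRegular (MvPolynomial (Fin n) K ⧸ I) (esymmList (Fin n) K d))
    (hd : ringKrullDim (MvPolynomial (Fin n) K ⧸ I) ≤ d) :
    depth (mIdeal n K) (MvPolynomial (Fin n) K ⧸ I) = d := by
  have hm : mIdeal n K = coordIdeal K ∅ := by
    rw [mIdeal, coordIdeal, Set.compl_empty, Set.image_univ]
  have hmem (r) (hr : r ∈ esymmList (Fin n) K d) : r ∈ mIdeal n K :=
    mem_span_range_X_of_mem_esymmList _ _ hr
  have hle : I ≤ mIdeal n K := hm ▸ hmon.le_coordIdeal hI (by simp)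
  have hm_ne : mIdeal n K ≠ ⊤ := hm ▸ (coordIdeal_isPrime _).ne_top
  rw [depth_eq_length_of_isRegular (isRegular_quotient_of_le hreg hmem hle hm_ne) hmem,
    length_esymmList]
  rwa [length_esymmList, Module.supportDim_quotient_eq_ringKrullDim]

theorem exists_nat_ringKrullDim_quotient_eq {σ K : Type*} [Finite σ] [Field K]
    {I : Ideal (MvPolynomial σ K)} (hI : I ≠ ⊤) :
    ∃ d : ℕ, ringKrullDim (MvPolynomial σ K ⧸ I) = d := by
  have := Ideal.Quotient.nontrivial_iff.mpr hI
  have hle : ringKrullDim (MvPolynomial σ K ⧸ I) ≤ (Nat.card σ : ℕ∞) :=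
    (ringKrullDim_quotient_le I).trans (by simp [ringKrullDim_eq_zero_of_field])
  have : FiniteRingKrullDim (MvPolynomial σ K ⧸ I) :=
    finiteRingKrullDim_iff_ne_bot_and_top.mpr
      ⟨(WithBot.bot_lt_coe 0 |>.trans_le ringKrullDim_nonneg_of_nontrivial).ne',
        (hle.trans_lt (WithBot.coe_lt_coe.mpr (ENat.natCast_lt_top _))).ne⟩
  exact ⟨_, Order.krullDim_eq_length_of_finiteDimensionalOrder⟩

end Decomposable

theorem statement_11_general (n : ℕ) (K : Type) [Field K] (I : Ideal (MvPolynomial (Fin n) K))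
    (hmon : IsMonomialIdeal I) (hunm : IsUnmixed I) (i : Fin n) (k : ℕ) (hk : 1 ≤ k)
    (hxk : (X i : MvPolynomial (Fin n) K) ^ k ∉ I)
    (hass : associatedPrimes (MvPolynomial (Fin n) K)
        (MvPolynomial (Fin n) K ⧸ (I + Ideal.span {(X i : MvPolynomial (Fin n) K) ^ k})) ⊆
      associatedPrimes (MvPolynomial (Fin n) K) (MvPolynomial (Fin n) K ⧸ I))
    (h1 : IsAssDecomposable (I + Ideal.span {(X i : MvPolynomial (Fin n) K) ^ k}))
    (h2 : IsAssDecomposable (I.colon (Ideal.span {(X i : MvPolynomial (Fin n) K) ^ k}))) :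
    (depth (mIdeal n K) (MvPolynomial (Fin n) K ⧸ I) : WithBot ℕ∞) =
        ringKrullDim (MvPolynomial (Fin n) K ⧸ I) ∧
    (depth (mIdeal n K) (MvPolynomial (Fin n) K ⧸
          I.colon (Ideal.span {(X i : MvPolynomial (Fin n) K) ^ k})) : WithBot ℕ∞) =
        ringKrullDim (MvPolynomial (Fin n) K ⧸ I) ∧
    (depth (mIdeal n K) (MvPolynomial (Fin n) K ⧸
          (I + Ideal.span {(X i : MvPolynomial (Fin n) K) ^ k})) : WithBot ℕ∞) =
        ringKrullDim (MvPolynomial (Fin n) K ⧸ I) := by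
  rw [Submodule.add_eq_sup] at hass h1 ⊢
  have hI_ne : I ≠ ⊤ := fun h => hxk (h ▸ Submodule.mem_top)
  obtain ⟨d, hd⟩ := exists_nat_ringKrullDim_quotient_eq hI_ne
  have hdim_le {J : Ideal (MvPolynomial (Fin n) K)} (hIJ : I ≤ J) :
      ringKrullDim (MvPolynomial (Fin n) K ⧸ J) ≤ d :=
    (ringKrullDim_le_of_surjective _ (Ideal.Quotient.factor_surjective hIJ)).trans hd.le
  have hass_dim (P) (hP : P ∈ associatedPrimes _ (MvPolynomial (Fin n) K ⧸ I)) :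
      ringKrullDim (MvPolynomial (Fin n) K ⧸ P) = d := (hunm P hP).symm.trans hd
  have hmon_sup := hmon.sup (isMonomialIdeal_span_X_pow i k)
  have hmon_colon : IsMonomialIdeal (I.colon (Ideal.span {(X i : MvPolynomial (Fin n) K) ^ k})) :=
    X_pow_eq_monomial (R := K) ▸ hmon.colon_monomial _
  have hreg_sup := h1.isWeaklyRegular_esymmList hmon_sup fun P hP => hass_dim P (hass hP)
  have hreg_colon := h2.isWeaklyRegular_esymmList hmon_colon fun P hP =>
    hass_dim P (associatedPrimes_quotient_colon_subset _ _ hP)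
  have hreg := isWeaklyRegular_quotient_of_colon_of_sup _ hreg_colon hreg_sup
  have hsup_ne : I ⊔ Ideal.span {X i ^ k} ≠ ⊤ := by
    refine hmon.sup_ne_top (isMonomialIdeal_span_X_pow i k) hI_ne fun h => ?_
    rw [Ideal.span_singleton_eq_top, isUnit_pow_iff (Nat.one_le_iff_ne_zero.mp hk)] at h
    exact X_prime.not_isUnit h
  have hcolon_ne : I.colon (Ideal.span {(X i : MvPolynomial (Fin n) K) ^ k}) ≠ ⊤ := by
    rwa [Ne, Submodule.colon_eq_top_iff_subset, SetLike.coe_subset_coe,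
      Ideal.span_singleton_le_iff_mem]
  rw [hd, hmon.depth_quotient_eq_of_isWeaklyRegular hI_ne hreg hd.le,
    hmon_colon.depth_quotient_eq_of_isWeaklyRegular hcolon_ne hreg_colon (hdim_le Ideal.le_colon),
    hmon_sup.depth_quotient_eq_of_isWeaklyRegular hsup_ne hreg_sup (hdim_le le_sup_left)]
  exact ⟨rfl, rfl, rfl⟩

/-- If `I` is an unmixed ass-decomposable monomial ideal which is not primary and
`x^k` is a decomposing monomial of `I`, then
`depth R/I = depth R/(I : x^k) = depth R/(I, x^k)`. -/
theorem statement_11 (n : ℕ) (K : Type) [Field K] (I : Ideal (MvPolynomial (Fin n) K))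
    (hmon : IsMonomialIdeal I) (hunm : IsUnmixed I) (hnp : ¬ I.IsPrimary)
    (i : Fin n) (k : ℕ) (hk : 1 ≤ k) (hx : (X i : MvPolynomial (Fin n) K) ∉ I.radical)
    (hass : associatedPrimes (MvPolynomial (Fin n) K)
        (MvPolynomial (Fin n) K ⧸ (I + Ideal.span {(X i : MvPolynomial (Fin n) K) ^ k})) =
      {𝔭 ∈ associatedPrimes (MvPolynomial (Fin n) K) (MvPolynomial (Fin n) K ⧸ I) |
        (X i : MvPolynomial (Fin n) K) ∈ 𝔭})
    (h1 : IsAssDecomposable (I + Ideal.span {(X i : MvPolynomial (Fin n) K) ^ k}))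
    (h2 : IsAssDecomposable (I.colon (Ideal.span {(X i : MvPolynomial (Fin n) K) ^ k}))) :
    depth (mIdeal n K) (MvPolynomial (Fin n) K ⧸ I) =
        depth (mIdeal n K) (MvPolynomial (Fin n) K ⧸ I.colon (Ideal.span {(X i : MvPolynomial (Fin n) K) ^ k})) ∧
    depth (mIdeal n K) (MvPolynomial (Fin n) K ⧸ I) =
        depth (mIdeal n K) (MvPolynomial (Fin n) K ⧸ (I + Ideal.span {(X i : MvPolynomial (Fin n) K) ^ k})) := by
  obtain ⟨h, h_colon, h_sup⟩ := statement_11_general n K I hmon hunm i k hk (fun h => hx ⟨k, h⟩)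
    (hass ▸ Set.sep_subset _ _) h1 h2
  exact ⟨WithBot.coe_injective (h.trans h_colon.symm), WithBot.coe_injective (h.trans h_sup.symm)⟩

end Paper
end

section
/- Let G be a chordal graph on vertex set [n] with edge ideal I = I(G) ⊆ R = K[x_1,…,x_n]. Then depth(R/I) = min{ dim R/𝔭 : 𝔭 ∈ ass(I) } = n − bigh(I), where bigh(I) is the maximum height of an associated prime of I. -/
open MvPolynomial

namespace Paper

/-- A chord of a cycle: an edge of `G` joining two vertices of the cycle that are not
adjacent in the cycle. `G` is chordal if every cycle of length at least four has a
chord. -/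
def IsChordalG {n : ℕ} (G : SimpleGraph (Fin n)) : Prop :=
  ∀ (v : Fin n) (w : G.Walk v v), w.IsCycle → 4 ≤ w.length →
    ∃ a b : Fin n, a ∈ w.support ∧ b ∈ w.support ∧ G.Adj a b ∧ s(a, b) ∉ w.edges

/-- The edge ideal `I(G) = (x_u x_v : {u,v} ∈ E(G))`. -/
noncomputable def edgeIdeal (n : ℕ) (K : Type) [Field K] (G : SimpleGraph (Fin n)) :
    Ideal (MvPolynomial (Fin n) K) :=
  Ideal.span {m | ∃ u v : Fin n, G.Adj u v ∧ m = X u * X v}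

/-!
The edge ideal of `G` is the Stanley–Reisner ideal `I_Δ` of the independence complex `Δ` of `G`.
Its associated primes are the ideals `P_F = (x_v : v ∉ F)` for the facets `F` of `Δ`, and
`dim R/P_F = |F|` and `ht P_F = n - |F|`; so the claim is that `depth R/I_Δ` is the smallest
cardinality of a facet.

If `r` is regular on `M`, every associated prime `𝔭` of `M` is properly contained in an associated
prime of `M/rM`. Hence a regular sequence is at most as long as some chain of primes above `𝔭`,
which gives `depth R/I_Δ ≤ |F|` for every facet `F`.

Conversely, let `u` be a vertex of `Δ`. Since `I_Δ : x_u` and `I_Δ + (x_u)` are the ideals of the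
star and of the deletion of `u`, the exact sequence
`0 → R/(I_Δ : x_u) → R/I_Δ → R/(I_Δ + (x_u)) → 0` and Rees' description of depth by `Ext` bound
`depth R/I_Δ` below by the smaller of the two outer depths. The star is a cone over the link, which
raises the depth by one. By induction along a vertex decomposition of `Δ`, some facet `F` satisfies
`|F| ≤ depth R/I_Δ`.

The independence complex of a chordal graph is vertex decomposable: by Dirac's theorem, a chordal
graph has a simplicial vertex, and any neighbour of a simplicial vertex is a shedding vertex.
-/

open CategoryTheory Abelian RingTheory.Sequence

section Depth

variable {A : Type} [CommRing A] {J : Ideal A}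
  {M : Type} [AddCommGroup M] [Module A M]

lemma depth_congr {M' : Type} [AddCommGroup M'] [Module A M'] (e : M ≃ₗ[A] M') :
    depth J M = depth J M' := by
  simp only [depth, e.isRegular_congr]

lemma depth_quotSMulTop_add_one_le {r : A} (hr : r ∈ J) (hreg : IsSMulRegular M r)
    [Nontrivial (QuotSMulTop r M)] : depth J (QuotSMulTop r M) + 1 ≤ depth J M := by
  rw [depth, ENat.sSup_add]
  · refine iSup₂_le fun k hk ↦ ?_
    obtain ⟨rs, rfl, hrs, hrs_reg⟩ := hk
    exact le_sSup ⟨r :: rs, by simp, by simpa using ⟨hr, hrs⟩,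
      (isRegular_cons_iff M r rs).2 ⟨hreg, hrs_reg⟩⟩
  · exact ⟨0, [], by simp, by simp, .nil A _⟩

lemma le_depth_iff_subsingleton_ext [IsNoetherianRing A] [Module.Finite A M]
    (hM : J • (⊤ : Submodule A M) < ⊤) {t : ℕ} :
    t ≤ depth J M ↔
      ∀ i < t, Subsingleton (Ext (ModuleCat.of A (Shrink.{0} (A ⧸ J))) (ModuleCat.of A M) i) := by
  have rees (k : ℕ) := (ModuleCat.exists_isRegular_tfae J k (ModuleCat.of A M) hM).out 1 3
  refine ⟨fun ht i hi ↦ ?_, fun h ↦ ?_⟩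
  · obtain ⟨-, ⟨rs, rfl, hrs, hreg⟩, hlt⟩ :=
      lt_sSup_iff.1 (lt_of_lt_of_le (Nat.cast_lt.2 hi : (i : ℕ∞) < t) ht)
    exact (rees rs.length).2 ⟨rs, rfl, hrs, hreg⟩ i (Nat.cast_lt.1 hlt)
  · obtain ⟨rs, hlen, hrs, hreg⟩ := (rees t).1 h
    exact le_sSup ⟨rs, by rw [hlen], hrs, hreg⟩

lemma min_depth_le_depth_of_exact [IsNoetherianRing A] [Module.Finite A M]
    {M₁ M₃ : Type} [AddCommGroup M₁] [Module A M₁] [Module.Finite A M₁]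
    [AddCommGroup M₃] [Module A M₃] [Module.Finite A M₃]
    (h₁ : J • (⊤ : Submodule A M₁) < ⊤) (h₂ : J • (⊤ : Submodule A M) < ⊤)
    (h₃ : J • (⊤ : Submodule A M₃) < ⊤) {f : M₁ →ₗ[A] M} {g : M →ₗ[A] M₃}
    (hf : Function.Injective f) (hg : Function.Surjective g) (hfg : Function.Exact f g) :
    min (depth J M₁) (depth J M₃) ≤ depth J M := by
  refine ENat.forall_natCast_le_iff_le.1 fun t ht ↦ ?_
  have ext₁ := (le_depth_iff_subsingleton_ext h₁).1 (ht.trans (min_le_left _ _))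
  have ext₃ := (le_depth_iff_subsingleton_ext h₃).1 (ht.trans (min_le_right _ _))
  refine (le_depth_iff_subsingleton_ext h₂).2 fun i hi ↦ ?_
  let S : ShortComplex (ModuleCat A) := .mk (ModuleCat.ofHom f) (ModuleCat.ofHom g)
    (by ext x; exact hfg.apply_apply_eq_zero x)
  have hS : S.ShortExact := ModuleCat.shortComplex_shortExact S hfg hf hg
  refine subsingleton_of_forall_eq 0 fun x ↦ ?_
  have hx : x.comp (Ext.mk₀ S.g) (add_zero i) = 0 := (ext₃ i hi).elim _ _
  obtain ⟨y, rfl⟩ := Ext.covariant_sequence_exact₂ _ hS x hx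
  rw [(ext₁ i hi).elim y 0, Ext.zero_comp]

end Depth

section AssociatedPrimes

lemma injective_quotSMulTop_map_subtype {A M : Type*} [CommRing A] [AddCommGroup M] [Module A M]
    {N : Submodule A M} {r : A} (h : IsSMulRegular (M ⧸ N) r) :
    Function.Injective (QuotSMulTop.map r N.subtype) := by
  have hexact : Function.Exact (QuotSMulTop.map r (0 : PUnit →ₗ[A] N))
      (QuotSMulTop.map r N.subtype) :=
    QuotSMulTop.map_first_exact_on_four_term_exact_of_isSMulRegular_last
      ((LinearMap.exact_zero_iff_injective _ _).2 N.injective_subtype)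
      (LinearMap.exact_subtype_mkQ N) h
  rw [map_zero] at hexact
  exact (LinearMap.exact_zero_iff_injective _ _).1 hexact

variable {A : Type*} [CommRing A] [IsNoetherianRing A] {J : Ideal A} [J.IsPrime]

open Module in
lemma exists_lt_mem_associatedPrimes_quotSMulTop {M : Type*} [AddCommGroup M] [Module A M]
    [Module.Finite A M] {p : Ideal A} (hp : p ∈ associatedPrimes A M) (hpJ : p ≤ J)
    {r : A} (hr : r ∈ J) (hreg : IsSMulRegular M r) :
    ∃ q ∈ associatedPrimes A (QuotSMulTop r M), q ≤ J ∧ p < q := by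
  obtain ⟨hp_prime, z, rfl⟩ := isAssociatedPrime_iff.1 hp
  set p := (⊥ : Submodule A M).colon {z}
  have mem_p {a : A} : a ∈ p ↔ a • z = 0 := by simp [p, Submodule.mem_colon_singleton]
  let N := Submodule.torsionBySet A M p
  have hzN : z ∈ N := (Submodule.mem_torsionBySet_iff _ _).2 fun a ↦ mem_p.1 a.2
  have hJN : (⟨J, ‹_›⟩ : PrimeSpectrum A) ∈ support A N :=
    mem_support_iff'.2 ⟨⟨z, hzN⟩, fun a ha h ↦
      ha (hpJ (mem_p.2 (congrArg Subtype.val h)))⟩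
  have hJ_quot : annihilator A (QuotSMulTop r N) ≤ J := by
    rw [← mem_support_iff_of_finite (p := ⟨J, ‹_›⟩), support_quotSMulTop]
    exact ⟨hJN, by simpa using hr⟩
  obtain ⟨q, hq, hqJ⟩ := Ideal.exists_minimalPrimes_le hJ_quot
  have hN_quot : Function.Injective (QuotSMulTop.map r N.subtype) := by
    refine injective_quotSMulTop_map_subtype
      ((isSMulRegular_quotient_iff_mem_of_smul_mem N r).2 fun x hx ↦ ?_)
    rw [Submodule.mem_torsionBySet_iff] at hx ⊢
    exact fun a ↦ hreg.right_eq_zero_of_smul (by rw [smul_comm, hx a])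
  refine ⟨q, associatedPrimes.subset_of_injective hN_quot
    (associatedPrimes.minimalPrimes_annihilator_subset_associatedPrimes A _ hq), hqJ, ?_⟩
  have hp_ann : p ≤ annihilator A N := fun a ha ↦
    mem_annihilator.2 fun x ↦ Subtype.ext ((Submodule.mem_torsionBySet_iff _ _).1 x.2 ⟨a, ha⟩)
  have hp_quot : p ≤ annihilator A (QuotSMulTop r N) :=
    hp_ann.trans ((Submodule.mkQ _).annihilator_le_of_surjective (Submodule.mkQ_surjective _))
  refine SetLike.lt_iff_le_and_exists.2 ⟨hp_quot.trans hq.1.2, r,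
    hq.1.2 (QuotSMulTop.mem_annihilator _ r), fun hrp ↦ ?_⟩
  have hz : z = 0 := hreg.right_eq_zero_of_smul (mem_p.1 hrp)
  exact hp_prime.ne_top ((Ideal.eq_top_iff_one _).2 (mem_p.2 (by simp [hz])))

lemma length_le_coheight_of_isWeaklyRegular {rs : List A} (hrs : ∀ r ∈ rs, r ∈ J)
    {M : Type*} [AddCommGroup M] [Module A M] [Module.Finite A M] {p : PrimeSpectrum A}
    (hp : p.asIdeal ∈ associatedPrimes A M) (hpJ : p.asIdeal ≤ J) (hreg : IsWeaklyRegular M rs) :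
    rs.length ≤ Order.coheight p := by
  induction rs generalizing M p with
  | nil => simp
  | cons r rs ih =>
    obtain ⟨hr, hrs⟩ := List.forall_mem_cons.1 hrs
    obtain ⟨hreg, hreg_rs⟩ := (isWeaklyRegular_cons_iff M r rs).1 hreg
    obtain ⟨q, hq, hqJ, hlt⟩ := exists_lt_mem_associatedPrimes_quotSMulTop hp hpJ hr hreg
    calc ((r :: rs).length : ℕ∞) = rs.length + 1 := by simp
      _ ≤ Order.coheight (⟨q, hq.1⟩ : PrimeSpectrum A) + 1 := by
        gcongr; exact ih hrs hq hqJ hreg_rs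
      _ ≤ Order.coheight p := Order.coheight_add_one_le hlt

end AssociatedPrimes

section Quotients

lemma depth_le_coheight {A : Type} [CommRing A] [IsNoetherianRing A] {J : Ideal A} [J.IsPrime]
    {M : Type} [AddCommGroup M] [Module A M] [Module.Finite A M] {p : PrimeSpectrum A}
    (hp : p.asIdeal ∈ associatedPrimes A M) (hpJ : p.asIdeal ≤ J) :
    depth J M ≤ Order.coheight p := by
  refine sSup_le ?_
  rintro _ ⟨rs, rfl, hrs, hreg⟩
  exact length_le_coheight_of_isWeaklyRegular hrs hp hpJ hreg.toIsWeaklyRegular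

lemma ringKrullDim_quotient_eq_coheight {A : Type*} [CommRing A] (p : PrimeSpectrum A) :
    ringKrullDim (A ⧸ p.asIdeal) = Order.coheight p := by
  rw [ringKrullDim_quotient, Order.coheight_eq_krullDim_Ici]
  rfl

lemma smul_top_quotient_lt_top {A : Type*} [CommRing A] {I J : Ideal A} (hIJ : I ≤ J)
    (hJ : J ≠ ⊤) : J • (⊤ : Submodule A (A ⧸ I)) < ⊤ := by
  refine lt_top_iff_ne_top.2 fun h ↦ hJ (J.eq_top_iff_one.2 ?_)
  have hone : algebraMap A (A ⧸ I) 1 ∈ J • (⊤ : Submodule A (A ⧸ I)) := by rw [h]; trivial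
  rwa [Ideal.smul_top_eq_map, Submodule.restrictScalars_mem, Ideal.Quotient.algebraMap_eq,
    Ideal.mem_quotient_iff_mem hIJ] at hone

lemma associatedPrimes_quotient_iInf {A ι : Type*} [CommRing A] [IsNoetherianRing A] [Finite ι]
    {p : ι → Ideal A} (hp : ∀ i, (p i).IsPrime) (hanti : ∀ i j, p i ≤ p j → i = j) :
    associatedPrimes A (A ⧸ ⨅ i, p i) = Set.range p := by
  classical
  have := Fintype.ofFinite ι
  rw [← Finset.inf_univ_eq_iInf]
  ext q
  constructor
  · intro hq
    obtain ⟨hq_prime, x, hx⟩ := isAssociatedPrime_iff.1 hq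
    obtain ⟨f, rfl⟩ := Ideal.Quotient.mk_surjective x
    have hq_inf : q = {i | f ∉ p i}.toFinset.inf p := by
      ext a
      have ha : a ∈ q ↔ a * f ∈ Finset.univ.inf p := by
        rw [hx, Submodule.mem_colon_singleton, Submodule.mem_bot, ← Ideal.Quotient.eq_zero_iff_mem]
        rfl
      simp only [ha, Submodule.mem_finsetInf, Set.mem_toFinset, Finset.mem_univ, Set.mem_ofPred_eq,
        true_imp_iff]
      exact forall_congr' fun i ↦ by rw [(hp i).mul_mem_iff_mem_or_mem]; tauto
    obtain ⟨i, -, hqi⟩ := Ideal.eq_inf_of_isPrime_inf (hq_inf ▸ hq_prime)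
    exact ⟨i, by rw [hq_inf, hqi]⟩
  · rintro ⟨i, rfl⟩
    refine Module.associatedPrimes.minimalPrimes_annihilator_subset_associatedPrimes A _ ?_
    rw [Ideal.annihilator_quotient]
    refine ⟨⟨hp i, Finset.inf_le (Finset.mem_univ i)⟩, fun q ⟨hq, hq_inf⟩ hqi ↦ ?_⟩
    obtain ⟨j, -, hjq⟩ := hq.inf_le'.1 hq_inf
    rwa [hanti j i (hjq.trans hqi)] at hjq

end Quotients

section QuotientDepth

open scoped Pointwise

variable {A : Type} [CommRing A] {I J : Ideal A} {r : A}

lemma min_depth_colon_depth_sup_le [IsNoetherianRing A] (hJ : J ≠ ⊤) (hcolon : I.colon {r} ≤ J)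
    (hsup : I ⊔ Ideal.span {r} ≤ J) :
    min (depth J (A ⧸ I.colon {r})) (depth J (A ⧸ I ⊔ Ideal.span {r})) ≤ depth J (A ⧸ I) := by
  have hmul : I.colon {r} ≤ Submodule.comap (LinearMap.toSpanSingleton A A r) I := fun a ha ↦
    Submodule.mem_colon_singleton.1 ha
  refine min_depth_le_depth_of_exact (smul_top_quotient_lt_top hcolon hJ)
    (smul_top_quotient_lt_top (le_sup_left.trans hsup) hJ) (smul_top_quotient_lt_top hsup hJ)
    (f := Submodule.mapQ _ I (LinearMap.toSpanSingleton A A r) hmul)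
    (g := Submodule.factor le_sup_left) ?_ (Submodule.factor_surjective _) ?_
  · refine (injective_iff_map_eq_zero _).2 fun x hx ↦ ?_
    obtain ⟨a, rfl⟩ := Submodule.mkQ_surjective _ x
    exact (Submodule.Quotient.mk_eq_zero _).2
      (Submodule.mem_colon_singleton.2 ((Submodule.Quotient.mk_eq_zero _).1 hx))
  · rw [LinearMap.exact_iff, Submodule.range_mapQ, LinearMap.range_toSpanSingleton]
    exact (Submodule.ker_liftQ ..).trans (by simp)

lemma depth_sup_span_singleton_add_one_le (hcolon : I.colon {r} ≤ I) (hr : r ∈ J)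
    (hsup : I ⊔ Ideal.span {r} ≠ ⊤) :
    depth J (A ⧸ I ⊔ Ideal.span {r}) + 1 ≤ depth J (A ⧸ I) := by
  have hreg : IsSMulRegular (A ⧸ I) r :=
    (isSMulRegular_quotient_iff_mem_of_smul_mem I r).2 fun a ha ↦
      hcolon (Submodule.mem_colon_singleton.2 (by rwa [smul_eq_mul, mul_comm]))
  have hmap : r • (⊤ : Submodule A (A ⧸ I)) = (A ∙ r).map I.mkQ := by
    rw [← Submodule.ideal_span_singleton_smul, ← Submodule.range_mkQ I, LinearMap.range_eq_map,
      ← Submodule.map_smul'', smul_eq_mul, Ideal.mul_top, Ideal.submodule_span_eq]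
  let e : QuotSMulTop r (A ⧸ I) ≃ₗ[A] A ⧸ I ⊔ Ideal.span {r} :=
    (Submodule.quotEquivOfEq _ _ hmap).trans (Submodule.quotientQuotientEquivQuotientSup I _)
  have := Ideal.Quotient.nontrivial_iff.2 hsup
  have := e.toEquiv.nontrivial
  rw [← depth_congr e]
  exact depth_quotSMulTop_add_one_le hr hreg

end QuotientDepth

section FacePrimes

lemma card_le_height_of_strictMono {V α : Type*} [Preorder α] {f : Finset V → α}
    (hf : StrictMono f) (s : Finset V) : s.card ≤ Order.height (f s) := by
  classical
  induction s using Finset.induction_on with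
  | empty => simp
  | insert v s hv ih =>
    calc ((insert v s).card : ℕ∞) = s.card + 1 := by simp [hv]
      _ ≤ Order.height (f s) + 1 := by gcongr
      _ ≤ Order.height (f (insert v s)) :=
        Order.height_add_one_le (hf (Finset.ssubset_insert hv))

variable {V : Type*}

/-- The ideal `P_F = (x_v : v ∉ F)` of the coordinate subspace spanned by a set `F` of
vertices. -/
noncomputable def faceIdeal (R : Type*) [CommSemiring R] (F : Finset V) :
    Ideal (MvPolynomial V R) :=
  Ideal.span (X '' (F : Set V)ᶜ)

lemma mem_faceIdeal {R : Type*} [CommSemiring R] {F : Finset V} {f : MvPolynomial V R} :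
    f ∈ faceIdeal R F ↔ ∀ m ∈ f.support, ¬ m.support ⊆ F := by
  simp only [faceIdeal, mem_ideal_span_X_image, Finset.not_subset, Finsupp.mem_support_iff,
    Set.mem_compl_iff, Finset.mem_coe, and_comm]

lemma faceIdeal_empty (R : Type*) [CommSemiring R] :
    faceIdeal R (∅ : Finset V) = Ideal.span (Set.range X) := by
  simp [faceIdeal]

lemma faceIdeal_le_faceIdeal {R : Type*} [CommSemiring R] [Nontrivial R] {F F' : Finset V} :
    faceIdeal R F ≤ faceIdeal R F' ↔ F' ⊆ F := by
  refine ⟨fun h v hv ↦ ?_, fun h ↦ Ideal.span_mono (by gcongr)⟩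
  by_contra hvF
  have hX : (X v : MvPolynomial V R) ∈ faceIdeal R F' :=
    h (Ideal.subset_span (Set.mem_image_of_mem X hvF))
  simp [mem_faceIdeal, support_X, Finsupp.support_single, hv] at hX

instance faceIdeal_isPrime {R : Type*} [CommRing R] [IsDomain R] (F : Finset V) :
    (faceIdeal R F).IsPrime := by
  classical
  let φ : MvPolynomial V R →ₐ[R] MvPolynomial V R := aeval fun v ↦ if v ∈ F then X v else 0
  have hφ : (Ideal.Quotient.mkₐ R (faceIdeal R F)).comp φ = Ideal.Quotient.mkₐ R _ := by
    refine algHom_ext fun v ↦ ?_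
    by_cases hv : v ∈ F
    · simp [φ, hv]
    · have hX : (X v : MvPolynomial V R) ∈ faceIdeal R F :=
        Ideal.subset_span (Set.mem_image_of_mem X hv)
      simp [φ, hv, Ideal.Quotient.eq_zero_iff_mem.2 hX]
  have hker : faceIdeal R F = RingHom.ker φ := by
    refine le_antisymm (Ideal.span_le.2 ?_) fun f hf ↦ ?_
    · rintro _ ⟨v, hv, rfl⟩
      simp [φ, show v ∉ F from hv]
    · rw [← Ideal.Quotient.eq_zero_iff_mem]
      simpa [show φ f = 0 from hf] using (DFunLike.congr_fun hφ f).symm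
  exact hker ▸ RingHom.ker_isPrime φ

/-- The ideal `P_F` as a point of the spectrum of the polynomial ring. -/
noncomputable def facePrime (R : Type*) [CommRing R] [IsDomain R] (F : Finset V) :
    PrimeSpectrum (MvPolynomial V R) :=
  ⟨faceIdeal R F, inferInstance⟩

lemma facePrime_strictAnti {R : Type*} [CommRing R] [IsDomain R] :
    StrictAnti (facePrime R : Finset V → PrimeSpectrum (MvPolynomial V R)) :=
  fun _ _ h ↦ lt_iff_le_not_ge.2
    ⟨faceIdeal_le_faceIdeal.2 h.subset, fun h' ↦ h.not_subset (faceIdeal_le_faceIdeal.1 h')⟩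

lemma height_add_coheight_le_card [Fintype V] {K : Type*} [Field K]
    (p : PrimeSpectrum (MvPolynomial V K)) :
    Order.height p + Order.coheight p ≤ Fintype.card V := by
  have hdim : ringKrullDim (MvPolynomial V K) = Fintype.card V := by
    simp [MvPolynomial.ringKrullDim_of_isNoetherianRing]
  rw [ringKrullDim, Order.krullDim_eq_iSup_height_add_coheight_of_nonempty] at hdim
  have hsup : ⨆ q : PrimeSpectrum (MvPolynomial V K), Order.height q + Order.coheight q =
      Fintype.card V := by exact_mod_cast hdim
  exact hsup ▸ le_iSup (fun q ↦ Order.height q + Order.coheight q) p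

lemma height_and_coheight_facePrime [Fintype V] [DecidableEq V] (K : Type*) [Field K]
    (F : Finset V) :
    Order.height (facePrime K F) = Fᶜ.card ∧ Order.coheight (facePrime K F) = F.card := by
  have hheight : (Fᶜ.card : ℕ∞) ≤ Order.height (facePrime K F) := by
    have hmono : StrictMono fun s : Finset V ↦ facePrime K sᶜ :=
      facePrime_strictAnti.comp (compl_strictAnti _)
    simpa using card_le_height_of_strictMono hmono Fᶜ
  have hcoheight : (F.card : ℕ∞) ≤ Order.coheight (facePrime K F) :=
    card_le_height_of_strictMono (α := (PrimeSpectrum (MvPolynomial V K))ᵒᵈ)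
      facePrime_strictAnti.dual_right F
  have hsum := height_add_coheight_le_card (facePrime K F)
  rw [← Finset.card_add_card_compl F] at hsum
  lift Order.height (facePrime K F) to ℕ using fun h ↦ by simp [h] at hsum with h
  lift Order.coheight (facePrime K F) to ℕ using fun h ↦ by simp [h] at hsum with c
  norm_cast at hheight hcoheight hsum ⊢
  omega

end FacePrimes

section SimplicialComplexes

variable {V : Type*}

/-- The facets of a simplicial complex `Δ`. Throughout, a simplicial complex on `V` is a
`LowerSet (Finset V)`, so that `⊥` is the void complex and `LowerSet.Iic ∅` is `{∅}`. -/
def facets (Δ : LowerSet (Finset V)) : Set (Finset V) := {F | Maximal (· ∈ Δ) F}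

/-- The deletion of a vertex `u`: all faces avoiding `u`. -/
def deletion (u : V) (Δ : LowerSet (Finset V)) : LowerSet (Finset V) where
  carrier := {F | F ∈ Δ ∧ u ∉ F}
  lower' _ _ h hF := ⟨Δ.lower h hF.1, fun hu ↦ hF.2 (h hu)⟩

variable {u : V} {Δ : LowerSet (Finset V)} {F : Finset V}

lemma mem_facets_Iic (W : Finset V) : W ∈ facets (LowerSet.Iic W) :=
  ⟨LowerSet.mem_Iic_iff.2 le_rfl, fun _ h _ ↦ h⟩

lemma mem_deletion : F ∈ deletion u Δ ↔ F ∈ Δ ∧ u ∉ F := Iff.rfl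

variable [DecidableEq V]

/-- The star of a vertex `u`: all faces that stay faces when `u` is added to them. -/
def star (u : V) (Δ : LowerSet (Finset V)) : LowerSet (Finset V) where
  carrier := {F | insert u F ∈ Δ}
  lower' _ _ h hF := Δ.lower (Finset.insert_subset_insert u h) hF

/-- The link of a vertex `u`: all faces avoiding `u` that stay faces when `u` is added. -/
def link (u : V) (Δ : LowerSet (Finset V)) : LowerSet (Finset V) := deletion u (star u Δ)

lemma mem_star : F ∈ star u Δ ↔ insert u F ∈ Δ := Iff.rfl

lemma mem_link : F ∈ link u Δ ↔ insert u F ∈ Δ ∧ u ∉ F := Iff.rfl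

lemma star_star : star u (star u Δ) = star u Δ := by
  ext F; simp [mem_star]

lemma star_Iic_insert {W : Finset V} :
    star u (LowerSet.Iic (insert u W)) = LowerSet.Iic (insert u W) := by
  ext F; simp [mem_star, Finset.insert_subset_iff]

lemma deletion_Iic_insert {W : Finset V} (hu : u ∉ W) :
    deletion u (LowerSet.Iic (insert u W)) = LowerSet.Iic W := by
  ext F
  simp only [SetLike.mem_coe, mem_deletion, LowerSet.mem_Iic_iff]
  exact ⟨fun h ↦ (Finset.subset_insert_iff_of_notMem h.2).1 h.1,
    fun h ↦ ⟨h.trans (Finset.subset_insert u W), fun huF ↦ hu (h huF)⟩⟩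

lemma insert_mem_facets (hF : F ∈ facets (link u Δ)) : insert u F ∈ facets Δ := by
  refine ⟨hF.prop.1, fun F' hF' hle ↦ ?_⟩
  have huF' : u ∈ F' := hle (Finset.mem_insert_self u F)
  have hlink : F'.erase u ∈ link u Δ :=
    mem_link.2 ⟨by rwa [Finset.insert_erase huF'], Finset.notMem_erase u F'⟩
  exact Finset.subset_insert_iff.2
    (hF.le_of_ge hlink (Finset.subset_erase.2 ⟨(Finset.insert_subset_iff.1 hle).2, hF.prop.2⟩))

/-- Vertex decomposable simplicial complexes: the void complex is excluded, and a complex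
that is not a simplex has a vertex `u` with vertex decomposable deletion and link such that
every facet of the deletion is a facet of the complex (a shedding vertex). -/
inductive VertexDecomposable : LowerSet (Finset V) → Prop
  | simplex (W : Finset V) : VertexDecomposable (LowerSet.Iic W)
  | shed {Δ : LowerSet (Finset V)} (u : V) (hu : facets (deletion u Δ) ⊆ facets Δ)
      (hdeletion : VertexDecomposable (deletion u Δ)) (hlink : VertexDecomposable (link u Δ)) :
      VertexDecomposable Δ

end SimplicialComplexes

section StanleyReisner

variable {V R : Type*}

/-- The Stanley–Reisner ideal `I_Δ`, spanned by the monomials whose support is not a face. -/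
noncomputable def stanleyReisnerIdeal (R : Type*) [CommSemiring R] (Δ : LowerSet (Finset V)) :
    Ideal (MvPolynomial V R) :=
  Ideal.span ((fun m ↦ monomial m 1) '' {m | m.support ∉ Δ})

lemma mem_stanleyReisnerIdeal [CommSemiring R] {Δ : LowerSet (Finset V)} {f : MvPolynomial V R} :
    f ∈ stanleyReisnerIdeal R Δ ↔ ∀ m ∈ f.support, m.support ∉ Δ := by
  rw [stanleyReisnerIdeal, mem_ideal_span_monomial_image]
  exact forall₂_congr fun m _ ↦ ⟨fun ⟨m', hm', hle⟩ h ↦ hm' (Δ.lower (Finsupp.support_mono hle) h),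
    fun h ↦ ⟨m, h, le_rfl⟩⟩

lemma stanleyReisnerIdeal_le_faceIdeal [CommSemiring R] {Δ : LowerSet (Finset V)} {F : Finset V}
    (hF : F ∈ Δ) : stanleyReisnerIdeal R Δ ≤ faceIdeal R F := fun _ hf ↦
  mem_faceIdeal.2 fun m hm h ↦ mem_stanleyReisnerIdeal.1 hf m hm (Δ.lower h hF)

lemma iInf_faceIdeal_facets [CommSemiring R] [Finite V] (Δ : LowerSet (Finset V)) :
    ⨅ F : facets Δ, faceIdeal R F.1 = stanleyReisnerIdeal R Δ := by
  refine le_antisymm (fun f hf ↦ mem_stanleyReisnerIdeal.2 fun m hm hmΔ ↦ ?_)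
    (le_iInf fun F ↦ stanleyReisnerIdeal_le_faceIdeal F.2.prop)
  obtain ⟨F, hmF, hF⟩ := Finite.exists_le_maximal (p := (· ∈ Δ)) hmΔ
  exact mem_faceIdeal.1 (Ideal.mem_iInf.1 hf ⟨F, hF⟩) m hm hmF

lemma associatedPrimes_stanleyReisnerIdeal [CommRing R] [IsDomain R] [IsNoetherianRing R]
    [Finite V] (Δ : LowerSet (Finset V)) :
    associatedPrimes (MvPolynomial V R) (MvPolynomial V R ⧸ stanleyReisnerIdeal R Δ) =
      faceIdeal R '' facets Δ := by
  rw [← iInf_faceIdeal_facets, associatedPrimes_quotient_iInf (fun _ ↦ inferInstance)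
    fun F F' h ↦ Subtype.ext (F'.2.eq_of_le F.2.prop (faceIdeal_le_faceIdeal.1 h)).symm,
    Set.image_eq_range]

lemma stanleyReisnerIdeal_colon_X [DecidableEq V] [CommRing R] (u : V)
    (Δ : LowerSet (Finset V)) :
    (stanleyReisnerIdeal R Δ).colon {X u} = stanleyReisnerIdeal R (star u Δ) := by
  have support_add_single (m : V →₀ ℕ) : (m + Finsupp.single u 1).support = insert u m.support := by
    ext v; by_cases h : u = v <;> simp [h, eq_comm]
  ext f
  simp [Submodule.mem_colon_singleton, mem_stanleyReisnerIdeal, support_mul_X,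
    support_add_single, mem_star]

lemma stanleyReisnerIdeal_sup_span_X [CommSemiring R] (u : V) (Δ : LowerSet (Finset V)) :
    stanleyReisnerIdeal R Δ ⊔ Ideal.span {X u} = stanleyReisnerIdeal R (deletion u Δ) := by
  have hX : ({X u} : Set (MvPolynomial V R)) =
      (fun m ↦ monomial m 1) '' {Finsupp.single u 1} := by simp [X]
  rw [stanleyReisnerIdeal, hX, ← Ideal.span_union, ← Set.image_union]
  ext f
  rw [mem_ideal_span_monomial_image, mem_stanleyReisnerIdeal]
  refine forall₂_congr fun m _ ↦ ⟨?_, fun h ↦ ?_⟩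
  · rintro ⟨m', hm' | rfl, hle⟩ h
    · exact hm' (Δ.lower (Finsupp.support_mono hle) h.1)
    · exact h.2 (Finsupp.support_mono hle (by simp))
  · by_cases hm : m.support ∈ Δ
    · have hu : u ∈ m.support := by_contra fun hu ↦ h ⟨hm, hu⟩
      exact ⟨_, .inr rfl, by simpa [Nat.one_le_iff_ne_zero] using hu⟩
    · exact ⟨m, .inl hm, le_rfl⟩

end StanleyReisner

section DepthOfComplexes

/-- The depth of the Stanley–Reisner ring `K[Δ]` with respect to the irrelevant maximal
ideal, which is the prime of the empty face. -/
noncomputable def stanleyReisnerDepth {V : Type} (K : Type) [CommRing K]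
    (Δ : LowerSet (Finset V)) : ℕ∞ :=
  depth (faceIdeal K (∅ : Finset V)) (MvPolynomial V K ⧸ stanleyReisnerIdeal K Δ)

variable {V : Type} {K : Type} [CommRing K] [IsDomain K] {u : V} {Δ : LowerSet (Finset V)}

lemma stanleyReisnerDepth_deletion_add_one_le [DecidableEq V] (hstar : star u Δ = Δ)
    (hΔ : ∅ ∈ Δ) :
    stanleyReisnerDepth K (deletion u Δ) + 1 ≤ stanleyReisnerDepth K Δ := by
  have hle : stanleyReisnerIdeal K (deletion u Δ) ≤ faceIdeal K ∅ :=
    stanleyReisnerIdeal_le_faceIdeal ⟨hΔ, Finset.notMem_empty u⟩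
  rw [stanleyReisnerDepth]
  rw [← stanleyReisnerIdeal_sup_span_X] at hle ⊢
  exact depth_sup_span_singleton_add_one_le (by rw [stanleyReisnerIdeal_colon_X, hstar])
    (hle (Ideal.mem_sup_right (Ideal.mem_span_singleton_self _)))
    (ne_top_of_le_ne_top (faceIdeal_isPrime ∅).ne_top hle)

lemma card_le_stanleyReisnerDepth_Iic (W : Finset V) :
    W.card ≤ stanleyReisnerDepth K (LowerSet.Iic W) := by
  classical
  induction W using Finset.induction_on with
  | empty => simp
  | insert v W hv ih =>
    calc ((insert v W).card : ℕ∞) = W.card + 1 := by simp [hv]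
      _ ≤ stanleyReisnerDepth K (deletion v (LowerSet.Iic (insert v W))) + 1 := by
        rw [deletion_Iic_insert hv]; gcongr
      _ ≤ stanleyReisnerDepth K (LowerSet.Iic (insert v W)) :=
        stanleyReisnerDepth_deletion_add_one_le star_Iic_insert (Finset.empty_subset _)

variable [DecidableEq V] [Finite V] [IsNoetherianRing K]

lemma min_stanleyReisnerDepth_star_deletion_le (hu : {u} ∈ Δ) :
    min (stanleyReisnerDepth K (star u Δ)) (stanleyReisnerDepth K (deletion u Δ)) ≤
      stanleyReisnerDepth K Δ := by
  have hstar : stanleyReisnerIdeal K (star u Δ) ≤ faceIdeal K ∅ :=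
    stanleyReisnerIdeal_le_faceIdeal hu
  have hdeletion : stanleyReisnerIdeal K (deletion u Δ) ≤ faceIdeal K ∅ :=
    stanleyReisnerIdeal_le_faceIdeal
      ⟨Δ.lower (Finset.empty_subset {u}) hu, Finset.notMem_empty u⟩
  rw [stanleyReisnerDepth, stanleyReisnerDepth]
  rw [← stanleyReisnerIdeal_colon_X] at hstar ⊢
  rw [← stanleyReisnerIdeal_sup_span_X] at hdeletion ⊢
  exact min_depth_colon_depth_sup_le (faceIdeal_isPrime ∅).ne_top hstar hdeletion

variable (K) in
lemma VertexDecomposable.exists_facet_card_le_stanleyReisnerDepth (hΔ : VertexDecomposable Δ) :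
    ∃ F ∈ facets Δ, F.card ≤ stanleyReisnerDepth K Δ := by
  induction hΔ with
  | simplex W => exact ⟨W, mem_facets_Iic W, card_le_stanleyReisnerDepth_Iic W⟩
  | @shed Δ u hu _ _ ih_deletion ih_link =>
    obtain ⟨F, hF, hF_depth⟩ := ih_deletion
    obtain ⟨F', hF', hF'_depth⟩ := ih_link
    have hu_mem : {u} ∈ Δ := Δ.lower (by simp) hF'.prop.1
    have hF'_star : ((insert u F').card : ℕ∞) ≤ stanleyReisnerDepth K (star u Δ) :=
      calc ((insert u F').card : ℕ∞) = F'.card + 1 := by simp [hF'.prop.2]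
        _ ≤ stanleyReisnerDepth K (link u Δ) + 1 := by gcongr
        _ ≤ stanleyReisnerDepth K (star u Δ) :=
          stanleyReisnerDepth_deletion_add_one_le star_star hu_mem
    obtain h | h := min_le_iff.1 (min_stanleyReisnerDepth_star_deletion_le (K := K) hu_mem)
    · exact ⟨insert u F', insert_mem_facets hF', hF'_star.trans h⟩
    · exact ⟨F, hu hF, hF_depth.trans h⟩

end DepthOfComplexes

section FacetBounds

variable {V : Type} [Finite V] {K : Type} [Field K]

lemma ringKrullDim_quotient_faceIdeal (F : Finset V) :
    ringKrullDim (MvPolynomial V K ⧸ faceIdeal K F) = F.card := by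
  classical
  have := Fintype.ofFinite V
  have hdim := ringKrullDim_quotient_eq_coheight (facePrime K F)
  rw [(height_and_coheight_facePrime K F).2] at hdim
  exact_mod_cast hdim

lemma stanleyReisnerDepth_le_card {Δ : LowerSet (Finset V)} {F : Finset V}
    (hF : F ∈ facets Δ) :
    stanleyReisnerDepth K Δ ≤ F.card := by
  classical
  have := Fintype.ofFinite V
  rw [← (height_and_coheight_facePrime K F).2]
  refine depth_le_coheight ?_ (faceIdeal_le_faceIdeal.2 (Finset.empty_subset F))
  rw [associatedPrimes_stanleyReisnerIdeal]
  exact Set.mem_image_of_mem _ hF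

end FacetBounds

section BigHeight

variable {V : Type} [Fintype V] [DecidableEq V] {K : Type} [Field K] {Δ : LowerSet (Finset V)}

lemma htP_faceIdeal (F : Finset V) : htP (faceIdeal K F) = Fᶜ.card := by
  rw [htP, iSup_pos (faceIdeal_isPrime F)]
  exact (height_and_coheight_facePrime K F).1

lemma bigh_stanleyReisnerIdeal :
    bigh (stanleyReisnerIdeal K Δ) = ⨆ F ∈ facets Δ, (Fᶜ.card : ℕ∞) := by
  simp only [bigh, associatedPrimes_stanleyReisnerIdeal, iSup_image, htP_faceIdeal]

variable (K) in
theorem statement_15_general (hΔ : VertexDecomposable Δ) :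
    (depth (Ideal.span (Set.range (X : V → MvPolynomial V K)))
        (MvPolynomial V K ⧸ stanleyReisnerIdeal K Δ) : WithBot ℕ∞) =
      sInf {d : WithBot ℕ∞ | ∃ 𝔭 ∈ associatedPrimes (MvPolynomial V K)
        (MvPolynomial V K ⧸ stanleyReisnerIdeal K Δ), d = ringKrullDim (MvPolynomial V K ⧸ 𝔭)} ∧
    depth (Ideal.span (Set.range (X : V → MvPolynomial V K)))
        (MvPolynomial V K ⧸ stanleyReisnerIdeal K Δ) =
      Fintype.card V - bigh (stanleyReisnerIdeal K Δ) := by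
  obtain ⟨F, hF, hF_le⟩ := hΔ.exists_facet_card_le_stanleyReisnerDepth K
  have hdepth : depth (Ideal.span (Set.range (X : V → MvPolynomial V K)))
      (MvPolynomial V K ⧸ stanleyReisnerIdeal K Δ) = F.card := by
    rw [← faceIdeal_empty]
    exact (stanleyReisnerDepth_le_card hF).antisymm hF_le
  have hmin : ∀ F' ∈ facets Δ, F.card ≤ F'.card := fun F' hF' ↦ by
    exact_mod_cast hF_le.trans (stanleyReisnerDepth_le_card hF')
  have hbigh : bigh (stanleyReisnerIdeal K Δ) = Fᶜ.card := by
    rw [bigh_stanleyReisnerIdeal]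
    refine le_antisymm (iSup₂_le fun F' hF' ↦ ?_) (le_iSup₂_of_le F hF le_rfl)
    gcongr 1
    have := hmin F' hF'
    simp only [Finset.card_compl]
    omega
  rw [hdepth, hbigh, associatedPrimes_stanleyReisnerIdeal]
  simp only [Set.exists_mem_image, ringKrullDim_quotient_faceIdeal]
  refine ⟨Eq.symm (IsLeast.csInf_eq ⟨?_, ?_⟩), ?_⟩
  · exact ⟨F, hF, rfl⟩
  · rintro _ ⟨F', hF', rfl⟩
    exact_mod_cast hmin F' hF'
  · norm_cast
    rw [← Finset.card_add_card_compl F, Nat.add_sub_cancel]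

end BigHeight

section ChordalGraphs

open SimpleGraph

variable {V : Type*} {G : SimpleGraph V}

lemma exists_isPath_isChordless_support_subset {u v : V} (p : G.Walk u v) :
    ∃ q : G.Walk u v, q.IsPath ∧ q.IsChordless ∧ q.support ⊆ p.support := by
  classical
  obtain ⟨q, hqp, hmin⟩ := exists_minimalFor_of_wellFoundedLT
    (fun q : G.Walk u v ↦ q.support ⊆ p.support) Walk.length ⟨p, List.Subset.refl _⟩
  have length_le (q' : G.Walk u v) (h : q'.support ⊆ q.support) : q.length ≤ q'.length :=
    le_of_not_gt fun hlt ↦ hlt.not_ge (hmin (List.Subset.trans h hqp) hlt.le)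
  have adj_succ {i j : ℕ} (hij : i < j) (hj : j ≤ q.length)
      (hadj : G.Adj (q.getVert i) (q.getVert j)) : j = i + 1 := by
    have hle := length_le ((q.take i).append (.cons hadj (q.drop j))) fun x hx ↦ by
      rw [Walk.mem_support_append_iff, Walk.support_cons, List.mem_cons] at hx
      obtain hx | rfl | hx := hx
      · exact (q.isSubwalk_take i).support_subset hx
      · exact q.getVert_mem_support i
      · exact (q.isSubwalk_drop j).support_subset hx
    simp only [Walk.length_append, Walk.take_length, Walk.length_cons, Walk.drop_length] at hle
    omega
  have hedge {i j : ℕ} (hij : i < j) (hj : j ≤ q.length)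
      (hadj : G.Adj (q.getVert i) (q.getVert j)) : s(q.getVert i, q.getVert j) ∈ q.edges := by
    obtain rfl := adj_succ hij hj hadj
    exact q.mk_mem_edges_iff_exists.2 ⟨i, by omega, rfl⟩
  refine ⟨q, ?_, Walk.isChordless_iff_forall_mem_edges.2 fun x y hx hy hadj ↦ ?_, hqp⟩
  · rw [← q.bypass_eq_self_of_length_le_length_bypass
      (length_le _ q.support_bypass_subset_support)]
    exact q.bypass_isPath
  · obtain ⟨i, rfl, hi⟩ := Walk.mem_support_iff_exists_getVert.1 hx
    obtain ⟨j, rfl, hj⟩ := Walk.mem_support_iff_exists_getVert.1 hy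
    obtain h | rfl | h := lt_trichotomy i j
    · exact hedge h hj hadj
    · exact (G.irrefl hadj).elim
    · exact Sym2.eq_swap ▸ hedge h hi hadj.symm

section Cone

variable {a s t : V} {q : G.Walk s t}

lemma isCycle_cons_concat (has : G.Adj a s) (hta : G.Adj t a) (hst : s ≠ t) (hq : q.IsPath)
    (ha : a ∉ q.support) : (Walk.cons has (q.concat hta)).IsCycle := by
  refine (Walk.cons_isCycle_iff _ has).2 ⟨hq.concat ha hta, ?_⟩
  rw [Walk.edges_concat, List.concat_eq_append, List.mem_append, List.mem_singleton, not_or]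
  refine ⟨fun h ↦ ha (q.fst_mem_support_of_mem_edges h), ?_⟩
  simp [hta.ne', hst]

lemma isChordless_cons_concat (has : G.Adj a s) (hta : G.Adj t a) (hq : q.IsChordless)
    (ha : ∀ x ∈ q.support, G.Adj a x → x = s ∨ x = t) :
    (Walk.cons has (q.concat hta)).IsChordless := by
  set c := Walk.cons has (q.concat hta)
  have hedges (e : Sym2 V) : e ∈ c.edges ↔ e = s(a, s) ∨ e ∈ q.edges ∨ e = s(t, a) := by
    simp [c, Walk.edges_concat]
  have hsupport (x : V) : x ∈ c.support ↔ x = a ∨ x ∈ q.support := by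
    simp only [c, Walk.support_cons, Walk.support_concat, List.mem_cons, List.mem_append,
      List.not_mem_nil, or_false]
    tauto
  have hapex (x : V) (hx : x ∈ q.support) (hax : G.Adj a x) : s(a, x) ∈ c.edges := by
    obtain rfl | rfl := ha x hx hax
    · exact (hedges _).2 (.inl rfl)
    · exact (hedges _).2 (.inr (.inr Sym2.eq_swap))
  refine Walk.isChordless_iff_forall_mem_edges.2 fun x y hx hy hadj ↦ ?_
  rw [hsupport] at hx hy
  rcases hx with rfl | hx <;> rcases hy with rfl | hy
  · exact (G.irrefl hadj).elim
  · exact hapex y hy hadj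
  · exact Sym2.eq_swap ▸ hapex x hx hadj.symm
  · exact (hedges _).2 (.inr (.inl (hq.mem_edges hx hy hadj)))

end Cone

/-- A chordal graph on an arbitrary vertex set: every chordless cycle is a triangle. -/
def Chordal (G : SimpleGraph V) : Prop :=
  ∀ ⦃v : V⦄ (c : G.Walk v v), c.IsCycle → c.IsChordless → c.length ≤ 3

lemma Chordal.adj_of_walk (hG : Chordal G) {a s t : V} (has : G.Adj a s) (hat : G.Adj a t)
    (hst : s ≠ t) (p : G.Walk s t)
    (hp : ∀ x ∈ p.support, x = s ∨ x = t ∨ x ≠ a ∧ ¬ G.Adj a x) : G.Adj s t := by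
  obtain ⟨q, hq_path, hq_chordless, hqp⟩ := exists_isPath_isChordless_support_subset p
  have ha : a ∉ q.support := fun h ↦ by
    obtain rfl | rfl | h := hp a (hqp h)
    · exact G.irrefl has
    · exact G.irrefl hat
    · exact h.1 rfl
  have hlength := hG _ (isCycle_cons_concat has hat.symm hst hq_path ha)
    (isChordless_cons_concat has hat.symm hq_chordless fun x hx hax ↦ by
      have := hp x (hqp hx); tauto)
  have hq_pos : q.length ≠ 0 := fun h ↦ hst (Walk.eq_of_length_eq_zero h)
  rw [Walk.length_cons, Walk.length_concat] at hlength
  exact Walk.adj_of_length_eq_one (p := q) (by omega)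

-- `C` is the component of `b` among the vertices of `W` outside the closed neighbourhood of `a`,
-- and `S` consists of the neighbours of `a` in `W` that are adjacent to `C`. Two non-adjacent
-- vertices of `S` would be joined by a chordless path through `C`, closed up to a cycle by `a`.
lemma Chordal.exists_clique_separator (hG : Chordal G) {W : Finset V} {a b : V} (hb : b ∈ W)
    (hba : b ≠ a) (hab : ¬ G.Adj a b) :
    ∃ C ⊆ W, ∃ S ⊆ W, b ∈ C ∧ G.IsClique S ∧ (∀ c ∈ C, c ≠ a ∧ ¬ G.Adj a c) ∧
      (∀ s ∈ S, G.Adj a s) ∧ ∀ c ∈ C, ∀ x ∈ W, G.Adj c x → x ∈ C ∨ x ∈ S := by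
  classical
  let Avoids (x : V) : Prop := x ∈ W ∧ x ≠ a ∧ ¬ G.Adj a x
  let C := {c ∈ W | ∃ p : G.Walk b c, ∀ x ∈ p.support, Avoids x}
  let S := {s ∈ W | G.Adj a s ∧ ∃ c ∈ C, G.Adj s c}
  have hC_avoids {c : V} (hc : c ∈ C) : Avoids c := by
    obtain ⟨-, p, hp⟩ := Finset.mem_filter.1 hc
    exact hp c p.end_mem_support
  refine ⟨C, Finset.filter_subset _ _, S, Finset.filter_subset _ _, ?_, ?_,
    fun c hc ↦ (hC_avoids hc).2, fun s hs ↦ (Finset.mem_filter.1 hs).2.1, fun c hc x hx hcx ↦ ?_⟩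
  · exact Finset.mem_filter.2 ⟨hb, .nil, by simpa using ⟨hb, hba, hab⟩⟩
  · intro s hs t ht hst
    obtain ⟨-, has, c, hc, hsc⟩ := Finset.mem_filter.1 hs
    obtain ⟨-, hat, d, hd, htd⟩ := Finset.mem_filter.1 ht
    obtain ⟨-, p, hp⟩ := Finset.mem_filter.1 hc
    obtain ⟨-, q, hq⟩ := Finset.mem_filter.1 hd
    refine hG.adj_of_walk has hat hst (.cons hsc ((p.reverse.append q).concat htd.symm)) ?_
    intro x hx
    simp only [Walk.support_cons, Walk.support_concat] at hx
    simp only [List.mem_cons, List.mem_append, Walk.mem_support_append_iff, Walk.support_reverse,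
      List.mem_reverse, List.not_mem_nil, or_false] at hx
    obtain rfl | (hx | hx) | rfl := hx
    · exact .inl rfl
    · exact .inr (.inr (hp x hx).2)
    · exact .inr (.inr (hq x hx).2)
    · exact .inr (.inl rfl)
  · by_cases hax : G.Adj a x
    · exact .inr (Finset.mem_filter.2 ⟨hx, hax, c, hc, hcx.symm⟩)
    · have hxa : x ≠ a := fun h ↦ (hC_avoids hc).2.2 (h ▸ hcx.symm)
      obtain ⟨-, p, hp⟩ := Finset.mem_filter.1 hc
      refine .inl (Finset.mem_filter.2 ⟨hx, p.concat hcx, fun y hy ↦ ?_⟩)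
      rw [Walk.support_concat, List.mem_append, List.mem_singleton] at hy
      exact hy.elim (hp y) fun h ↦ h ▸ ⟨hx, hxa, hax⟩

/-- A vertex `w ∈ W` is simplicial in the induced subgraph on `W` if its neighbours in `W` form a
clique. -/
def IsSimplicial (G : SimpleGraph V) (W : Finset V) (w : V) : Prop :=
  w ∈ W ∧ G.IsClique {x ∈ W | G.Adj w x}

lemma Chordal.exists_isSimplicial_notMem (hG : Chordal G) {W S : Finset V} (hS : G.IsClique S)
    (hSW : S ⊂ W) : ∃ w ∉ S, IsSimplicial G W w := by
  classical
  induction W using Finset.strongInduction generalizing S with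
  | H W ih =>
  by_cases hW : G.IsClique W
  · obtain ⟨w, hw, hwS⟩ := Finset.exists_of_ssubset hSW
    exact ⟨w, hwS, hw, hW.subset fun x hx ↦ hx.1⟩
  obtain ⟨a, ha, b, hb, hba, hab, hSa⟩ : ∃ a ∈ W, ∃ b ∈ W, b ≠ a ∧ ¬ G.Adj a b ∧
      ∀ s ∈ S, s ≠ a → G.Adj a s := by
    by_cases h : ∃ a ∈ S, ∃ b ∈ W, b ≠ a ∧ ¬ G.Adj a b
    · obtain ⟨a, ha, b, hb, hba, hab⟩ := h
      exact ⟨a, hSW.subset ha, b, hb, hba, hab, fun s hs hsa ↦ hS ha hs hsa.symm⟩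
    · push Not at h
      simp only [IsClique, Set.Pairwise] at hW
      push Not at hW
      obtain ⟨a, ha, b, hb, hba, hab⟩ := hW
      exact ⟨a, ha, b, hb, hba.symm, hab, fun s hs hsa ↦ (h s hs a ha hsa.symm).symm⟩
  obtain ⟨C, hCW, T, hTW, hbC, hT, hCa, hTa, hC⟩ := hG.exists_clique_separator hb hba hab
  have haCT : a ∉ C ∪ T := fun h ↦ (Finset.mem_union.1 h).elim
    (fun h ↦ (hCa a h).1 rfl) fun h ↦ G.irrefl (hTa a h)
  have hCTW : C ∪ T ⊂ W :=
    (Finset.ssubset_iff_of_subset (Finset.union_subset hCW hTW)).2 ⟨a, ha, haCT⟩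
  have hTC : T ⊂ C ∪ T := (Finset.ssubset_iff_of_subset Finset.subset_union_right).2
    ⟨b, Finset.mem_union_left _ hbC, fun h ↦ hab (hTa b h)⟩
  obtain ⟨w, hwT, hw, hw_clique⟩ := ih _ hCTW hT hTC
  have hwC : w ∈ C := (Finset.mem_union.1 hw).resolve_right hwT
  refine ⟨w, fun hwS ↦ (hCa w hwC).2 (hSa w hwS (hCa w hwC).1), hCW hwC,
    hw_clique.subset ?_⟩
  rintro x ⟨hxW, hwx⟩
  exact ⟨Finset.mem_union.2 (hC w hwC x hxW hwx), hwx⟩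

end ChordalGraphs

section IndependenceComplex

variable {V : Type*} {G : SimpleGraph V} {W : Finset V}

/-- The independence complex of the induced subgraph of `G` on `W`. -/
def indepComplex (G : SimpleGraph V) (W : Finset V) : LowerSet (Finset V) where
  carrier := {F | F ⊆ W ∧ G.IsIndepSet F}
  lower' _ _ h hF := ⟨h.trans hF.1, hF.2.mono h⟩

lemma mem_indepComplex {F : Finset V} : F ∈ indepComplex G W ↔ F ⊆ W ∧ G.IsIndepSet F := Iff.rfl

lemma indepComplex_eq_Iic (hW : G.IsIndepSet W) : indepComplex G W = LowerSet.Iic W := by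
  ext F
  exact and_iff_left_of_imp fun h ↦ hW.mono h

lemma isIndepSet_insert {u : V} {s : Set V} :
    G.IsIndepSet (insert u s) ↔ G.IsIndepSet s ∧ ∀ x ∈ s, ¬ G.Adj u x := by
  have : Std.Symm fun x y ↦ ¬ G.Adj x y := ⟨fun _ _ h h' ↦ h h'.symm⟩
  rw [SimpleGraph.IsIndepSet, Set.pairwise_insert_of_symm]
  exact and_congr_right fun _ ↦ forall₂_congr fun x _ ↦
    ⟨fun h hux ↦ h hux.ne hux, fun h _ ↦ h⟩

-- The neighbours in `W` of a simplicial neighbour `w` of `u` are neighbours of `u`, so that an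
-- independent set that can be enlarged by `u` can also be enlarged by `w`.
lemma IsSimplicial.facets_deletion_subset {w u : V} (hw : IsSimplicial G W w) (hu : u ∈ W)
    (hwu : G.Adj w u) :
    facets (deletion u (indepComplex G W)) ⊆ facets (indepComplex G W) := by
  classical
  intro F hF
  refine ⟨hF.prop.1, fun F' hF' hle ↦ ?_⟩
  by_cases huF' : u ∈ F'
  · have hadj_w {x : V} (hx : x ∈ F) : ¬ G.Adj w x := fun hwx ↦ by
      have hxu : x ≠ u := fun h ↦ hF.prop.2 (h ▸ hx)
      exact hF'.2 (hle hx) huF' hxu (hw.2 ⟨hF'.1 (hle hx), hwx⟩ ⟨hu, hwu⟩ hxu)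
    have hwF_indep : G.IsIndepSet (insert w F : Finset V) := by
      rw [Finset.coe_insert, isIndepSet_insert]
      exact ⟨hF.prop.1.2, fun x hx ↦ hadj_w hx⟩
    have hwF : insert w F ∈ deletion u (indepComplex G W) :=
      ⟨⟨Finset.insert_subset hw.1 hF.prop.1.1, hwF_indep⟩, by simp [hwu.ne', hF.prop.2]⟩
    have hw_mem : w ∈ F := hF.le_of_ge hwF (Finset.subset_insert w F) (Finset.mem_insert_self w F)
    exact (hF'.2 (hle hw_mem) huF' hwu.ne hwu).elim
  · exact hF.le_of_ge ⟨hF', huF'⟩ hle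

variable [DecidableEq V]

lemma deletion_indepComplex (u : V) :
    deletion u (indepComplex G W) = indepComplex G (W.erase u) := by
  ext F
  simp only [SetLike.mem_coe, mem_deletion, mem_indepComplex, Finset.subset_erase]
  tauto

lemma link_indepComplex [DecidableRel G.Adj] {u : V} (hu : u ∈ W) :
    link u (indepComplex G W) = indepComplex G {x ∈ W | x ≠ u ∧ ¬ G.Adj u x} := by
  ext F
  simp only [SetLike.mem_coe, mem_link, mem_indepComplex, Finset.coe_insert, isIndepSet_insert,
    Finset.subset_iff, Finset.mem_filter]
  grind

lemma Chordal.vertexDecomposable_indepComplex (hG : Chordal G) (W : Finset V) :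
    VertexDecomposable (indepComplex G W) := by
  classical
  induction W using Finset.strongInduction with
  | H W ih =>
  by_cases hW : G.IsIndepSet W
  · exact indepComplex_eq_Iic hW ▸ .simplex W
  let U := {x ∈ W | ∃ y ∈ W, G.Adj x y}
  have hU : U.Nonempty := by
    simp only [SimpleGraph.IsIndepSet, Set.Pairwise] at hW
    push Not at hW
    obtain ⟨x, hx, y, hy, -, hxy⟩ := hW
    exact ⟨x, Finset.mem_filter.2 ⟨hx, y, hy, hxy⟩⟩
  obtain ⟨w, -, hwU, hw_clique⟩ := hG.exists_isSimplicial_notMem (S := ∅) (by simp)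
    (Finset.empty_ssubset.2 hU)
  obtain ⟨hwW, u, hu, hwu⟩ := Finset.mem_filter.1 hwU
  have hw : IsSimplicial G W w := by
    refine ⟨hwW, hw_clique.subset ?_⟩
    rintro x ⟨hx, hwx⟩
    exact ⟨Finset.mem_filter.2 ⟨hx, w, hwW, hwx.symm⟩, hwx⟩
  refine .shed u (hw.facets_deletion_subset hu hwu) ?_ ?_
  · rw [deletion_indepComplex]
    exact ih _ (Finset.erase_ssubset hu)
  · rw [link_indepComplex hu]
    exact ih _ (Finset.filter_ssubset.2 ⟨u, hu, by simp⟩)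

end IndependenceComplex

section EdgeIdeals

lemma IsChordalG.chordal {n : ℕ} {G : SimpleGraph (Fin n)} (hG : IsChordalG G) : Chordal G := by
  intro v c hc hc_chordless
  by_contra! hlength
  obtain ⟨a, b, ha, hb, hadj, hab⟩ := hG v c hc hlength
  exact hab (hc_chordless.mem_edges ha hb hadj)

lemma edgeIdeal_eq_stanleyReisnerIdeal {n : ℕ} (K : Type) [Field K] (G : SimpleGraph (Fin n)) :
    edgeIdeal n K G = stanleyReisnerIdeal K (indepComplex G Finset.univ) := by
  have hspan : {m : MvPolynomial (Fin n) K | ∃ u v, G.Adj u v ∧ m = X u * X v} =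
      (fun m ↦ monomial m 1) ''
        {m | ∃ u v, G.Adj u v ∧ m = Finsupp.single u 1 + Finsupp.single v 1} := by
    ext f
    constructor
    · rintro ⟨u, v, h, rfl⟩
      exact ⟨_, ⟨u, v, h, rfl⟩, by simp [X, monomial_mul]⟩
    · rintro ⟨_, ⟨u, v, h, rfl⟩, rfl⟩
      exact ⟨u, v, h, by simp [X, monomial_mul]⟩
  ext f
  rw [edgeIdeal, hspan, mem_ideal_span_monomial_image, mem_stanleyReisnerIdeal]
  refine forall₂_congr fun m _ ↦ ⟨?_, fun h ↦ ?_⟩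
  · rintro ⟨_, ⟨u, v, huv, rfl⟩, hle⟩ ⟨-, h⟩
    exact h (Finsupp.support_mono hle (by simp)) (Finsupp.support_mono hle (by simp)) huv.ne huv
  · obtain ⟨u, hu, v, hv, huv⟩ : ∃ u ∈ m.support, ∃ v ∈ m.support, G.Adj u v := by
      by_contra! hm
      exact h ⟨Finset.subset_univ _, fun u hu v hv _ ↦ hm u hu v hv⟩
    refine ⟨_, ⟨u, v, huv, rfl⟩, fun i ↦ ?_⟩
    have := huv.ne
    rw [Finsupp.mem_support_iff] at hu hv
    rw [Finsupp.add_apply, Finsupp.single_apply, Finsupp.single_apply]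
    split_ifs <;> grind

end EdgeIdeals

/-- For the edge ideal `I` of a chordal graph `G`,
`depth R/I = min {dim R/𝔭 : 𝔭 ∈ ass(I)} = n - bigh(I)`. -/
theorem statement_15 (n : ℕ) (K : Type) [Field K] (G : SimpleGraph (Fin n))
    (hG : IsChordalG G) :
    (depth (mIdeal n K) (MvPolynomial (Fin n) K ⧸ edgeIdeal n K G) : WithBot ℕ∞) =
        sInf {d : WithBot ℕ∞ | ∃ 𝔭 ∈ associatedPrimes (MvPolynomial (Fin n) K)
            (MvPolynomial (Fin n) K ⧸ edgeIdeal n K G), d = ringKrullDim (MvPolynomial (Fin n) K ⧸ 𝔭)} ∧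
    depth (mIdeal n K) (MvPolynomial (Fin n) K ⧸ edgeIdeal n K G) =
        (n : ℕ∞) - bigh (edgeIdeal n K G) := by
  rw [edgeIdeal_eq_stanleyReisnerIdeal]
  simpa [mIdeal] using
    statement_15_general K (hG.chordal.vertexDecomposable_indepComplex Finset.univ)

end Paper
end
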